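/- arXiv:math/0411347 — 2 statements merged into one kernel-verified Lean document; each statement's English description precedes it below -/
import Mathlib

section
/- The integral group cohomology of the commutator subgroup F' of Thompson's group F is infinite cyclic in every even degree and trivial in every odd degree: H^n(F'; ℤ) ≅ ℤ when n is even and H^n(F'; ℤ) = 0 when n is odd. (Additively this is the statement that H^*(F') is a divided polynomial ring Γ(u) on one generator u of degree 2.) -/
/-- The defining relations of Thompson's group `F`. -/
def thompsonRels : Set (FreeGroup ℕ) :=
  {r | ∃ i n : ℕ, i < n ∧
    r = (FreeGroup.of i)⁻¹ * FreeGroup.of n * FreeGroup.of i * (FreeGroup.of (n + 1))⁻¹}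

/-- Thompson's group `F`, defined by its infinite presentation. -/
abbrev ThompsonF : Type := PresentedGroup thompsonRels

namespace TF

def x (n : ℕ) : ThompsonF := PresentedGroup.of n

lemma x_rel {i n : ℕ} (h : i < n) : (x i)⁻¹ * x n * x i = x (n + 1) := by
  have : (PresentedGroup.mk thompsonRels) ((FreeGroup.of i)⁻¹ * FreeGroup.of n * FreeGroup.of i
      * (FreeGroup.of (n + 1))⁻¹) = 1 :=
    PresentedGroup.one_of_mem ⟨i, n, h, rfl⟩
  simp only [map_mul, map_inv] at this
  exact mul_inv_eq_one.1 this

def toG {G : Type*} [Group G] (f : ℕ → G) (h : ∀ i n, i < n → (f i)⁻¹ * f n * f i = f (n + 1)) :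
    ThompsonF →* G :=
  PresentedGroup.toGroup (f := f) (by
    rintro r ⟨i, n, hin, rfl⟩
    simp [h i n hin])

lemma toG_x {G : Type*} [Group G] (f : ℕ → G) (h) (n : ℕ) : toG f h (x n) = f n :=
  PresentedGroup.toGroup.of _

def y (i : ℤ) : ThompsonF := x 0 ^ (1 - i) * x 1 * x 0 ^ (i - 1)

lemma y_conj (i j : ℤ) : x 0 ^ (-j) * y i * x 0 ^ j = y (i + j) := by
  simp only [y]
  rw [show x 0 ^ (1 - (i + j)) = x 0 ^ (-j) * x 0 ^ (1 - i) by rw [← zpow_add]; congr 1; ring,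
    show x 0 ^ (i + j - 1) = x 0 ^ (i - 1) * x 0 ^ j by rw [← zpow_add]; congr 1; ring]
  group

lemma y_nat (n : ℕ) : y (n + 1) = x (n + 1) := by
  induction n with
  | zero => simp [y]
  | succ n ih =>
    have := y_conj (n + 1) 1
    rw [ih] at this
    simp only [zpow_neg, zpow_one] at this
    rw [x_rel (by omega)] at this
    rw [this]; push_cast; rfl

lemma y_rel {i n : ℤ} (h : i < n) : y n * y i = y i * y (n + 1) := by
  obtain ⟨k, hk⟩ : ∃ k : ℕ, n = i + k + 1 := ⟨(n - i - 1).toNat, by omega⟩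
  have h1 := y_conj 1 (i - 1)
  have h2 := y_conj ((k + 1 : ℕ) + 1) (i - 1)
  have h3 := y_conj ((k + 2 : ℕ) + 1) (i - 1)
  rw [show (1 : ℤ) + (i - 1) = i by ring] at h1
  rw [show (((k + 1 : ℕ) : ℤ) + 1 + (i - 1)) = n by push_cast; omega] at h2
  rw [show (((k + 2 : ℕ) : ℤ) + 1 + (i - 1)) = n + 1 by push_cast; omega] at h3
  rw [y_nat] at h2 h3
  have h0 : y 1 = x 1 := by simpa using y_nat 0
  rw [h0] at h1
  have := x_rel (show 1 < k + 1 + 1 by omega)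
  rw [← h1, ← h2, ← h3]
  rw [show k + 2 + 1 = k + 1 + 1 + 1 by ring, ← this]
  group

lemma y_rel' {i n : ℤ} (h : i < n) : (y i)⁻¹ * y n = y (n + 1) * (y i)⁻¹ := by
  rw [inv_mul_eq_iff_eq_mul, ← mul_assoc, ← y_rel h]; group

lemma y_rel'' {i n : ℤ} (h : n < i) : (y i)⁻¹ * y n = y n * (y (i + 1))⁻¹ := by
  rw [inv_mul_eq_iff_eq_mul, ← mul_assoc, y_rel h]; group

def dg : ThompsonF →* Multiplicative ℤ :=
  toG (fun n => if n = 0 then 1 else Multiplicative.ofAdd 1) (by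
    intro i n h
    by_cases hi : i = 0 <;> simp [hi, show n ≠ 0 by omega])

def dg0 : ThompsonF →* Multiplicative ℤ :=
  toG (fun n => if n = 0 then Multiplicative.ofAdd 1 else 1) (by
    intro i n h
    by_cases hi : i = 0 <;> simp [hi, show n ≠ 0 by omega])

lemma dg_y (i : ℤ) : dg (y i) = Multiplicative.ofAdd 1 := by
  simp [y, dg, toG_x]

lemma dg0_y (i : ℤ) : dg0 (y i) = 1 := by
  simp [y, dg0, toG_x, ← zpow_add]

/-- The subgroup generated by the `y i`. -/
def K : Subgroup ThompsonF := Subgroup.closure (Set.range y)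

lemma y_mem (i : ℤ) : y i ∈ K := Subgroup.subset_closure ⟨i, rfl⟩

lemma x0_norm (j : ℤ) {k : ThompsonF} (hk : k ∈ K) : x 0 ^ (-j) * k * x 0 ^ j ∈ K := by
  induction hk using Subgroup.closure_induction with
  | mem g hg => obtain ⟨i, rfl⟩ := hg; rw [y_conj]; exact y_mem _
  | one => simp [K.one_mem]
  | mul a b _ _ ha hb =>
    have := K.mul_mem ha hb
    convert this using 1; group
  | inv a _ ha =>
    have := K.inv_mem ha
    convert this using 1; group

lemma exists_decomp (g : ThompsonF) : ∃ k ∈ K, ∃ j : ℤ, g = k * x 0 ^ j := by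
  have hg : g ∈ Subgroup.closure (Set.range (PresentedGroup.of (rels := thompsonRels))) := by
    rw [PresentedGroup.closure_range_of]; trivial
  induction hg using Subgroup.closure_induction with
  | mem g hg =>
    obtain ⟨n, rfl⟩ := hg
    rcases n with _ | n
    · exact ⟨1, K.one_mem, 1, by simp [x]⟩
    · exact ⟨y (n + 1), y_mem _, 0, by rw [y_nat]; simp [x]⟩
  | one => exact ⟨1, K.one_mem, 0, by simp⟩
  | mul a b _ _ ha hb =>
    obtain ⟨k, hk, j, rfl⟩ := ha
    obtain ⟨k', hk', j', rfl⟩ := hb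
    refine ⟨_, K.mul_mem hk (x0_norm (-j) hk'), j + j', ?_⟩
    group
  | inv a _ ha =>
    obtain ⟨k, hk, j, rfl⟩ := ha
    refine ⟨_, x0_norm j (K.inv_mem hk), -j, ?_⟩
    group

lemma dg0_K {k : ThompsonF} (hk : k ∈ K) : dg0 k = 1 := by
  have : K ≤ dg0.ker := by
    rw [K, Subgroup.closure_le]; rintro _ ⟨i, rfl⟩; exact dg0_y i
  exact this hk

lemma ab_K {k : ThompsonF} (hk : k ∈ K) :
    Abelianization.of k = Abelianization.of (x 1) ^ (Multiplicative.toAdd (dg k)) := by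
  induction hk using Subgroup.closure_induction with
  | mem g hg =>
    obtain ⟨i, rfl⟩ := hg
    rw [dg_y]
    simp only [y, map_mul, map_zpow, toAdd_ofAdd, zpow_one]
    rw [mul_right_comm, ← zpow_add]; simp
  | one => simp
  | mul a b _ _ ha hb => rw [map_mul, ha, hb, ← zpow_add]; simp
  | inv a _ ha => rw [map_inv, ha, map_inv]; simp

lemma mem_comm_iff (g : ThompsonF) : g ∈ commutator ThompsonF ↔ g ∈ K ∧ dg g = 1 := by
  constructor
  · intro hg
    have h1 : dg g = 1 := Abelianization.commutator_subset_ker dg hg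
    have h0 : dg0 g = 1 := Abelianization.commutator_subset_ker dg0 hg
    refine ⟨?_, h1⟩
    obtain ⟨k, hk, j, rfl⟩ := exists_decomp g
    rw [map_mul, dg0_K hk, map_zpow, one_mul] at h0
    have : dg0 (x 0) = Multiplicative.ofAdd 1 := by simp [dg0, toG_x]
    rw [this, ← ofAdd_zsmul, ofAdd_eq_one] at h0
    have hj : j = 0 := by simpa using h0
    simpa [hj] using hk
  · rintro ⟨hk, h⟩
    have := ab_K hk
    rw [h] at this
    rw [← Abelianization.ker_of, MonoidHom.mem_ker, this]
    simp

/-- positive monoids -/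
def Pge (i : ℤ) : Submonoid ThompsonF := Submonoid.closure (y '' Set.Ici i)
def P : Submonoid ThompsonF := Submonoid.closure (Set.range y)

lemma Pge_anti {i j : ℤ} (h : i ≤ j) : Pge j ≤ Pge i :=
  Submonoid.closure_mono (Set.image_mono (Set.Ici_subset_Ici.2 h))

lemma y_Pge {i j : ℤ} (h : i ≤ j) : y j ∈ Pge i := Submonoid.subset_closure ⟨j, h, rfl⟩
lemma y_P (j : ℤ) : y j ∈ P := Submonoid.subset_closure ⟨j, rfl⟩
lemma Pge_le (i : ℤ) : Pge i ≤ P := Submonoid.closure_mono (by rintro _ ⟨j, _, rfl⟩; exact ⟨j, rfl⟩)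
lemma P_le {p} (h : p ∈ P) : p ∈ K := by
  have : P ≤ K.toSubmonoid := by
    rw [P, Submonoid.closure_le]; rintro _ ⟨i, rfl⟩; exact y_mem i
  exact this h

lemma P_cases {p : ThompsonF} (hp : p ∈ P) : p = 1 ∨ ∃ i, ∃ q ∈ Pge i, p = y i * q := by
  induction hp using Submonoid.closure_induction_left with
  | one => exact Or.inl rfl
  | mul_left g hg q _ ih =>
    obtain ⟨j, rfl⟩ := hg
    right
    rcases ih with rfl | ⟨i, q, hq, rfl⟩
    · exact ⟨j, 1, one_mem _, rfl⟩
    · rcases le_or_gt j i with h | h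
      · exact ⟨j, _, mul_mem (y_Pge h) (Pge_anti h hq), rfl⟩
      · exact ⟨i, _, mul_mem (y_Pge (show i ≤ j + 1 by omega)) hq, by
          rw [← mul_assoc, y_rel h, mul_assoc]⟩

def s (n : ℤ) : Equiv.Perm ℚ where
  toFun u := u + max 0 (min 1 (u - n))
  invFun u := u - max 0 (min 1 ((u - n) / 2))
  left_inv u := by
    rcases le_total 0 (min 1 (u - n)) with h | h <;>
    rcases le_total 1 (u - n) with h' | h' <;> 
    rcases le_total 1 ((u + max 0 (min 1 (u - n)) - n)/2) with h'' | h'' <;>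
    rcases le_total 0 (min 1 ((u + max 0 (min 1 (u - n)) - n)/2)) with h3 | h3 <;>
    simp_all <;> linarith
  right_inv u := by
    rcases le_total 0 (min 1 ((u - n) / 2)) with h | h <;>
    rcases le_total 1 ((u - n) / 2) with h' | h' <;> 
    rcases le_total 1 (u - max 0 (min 1 ((u - n) / 2)) - n) with h'' | h'' <;>
    rcases le_total 0 (min 1 (u - max 0 (min 1 ((u - n) / 2)) - n)) with h3 | h3 <;>
    simp_all <;> linarith

lemma s_le {n : ℤ} {u : ℚ} (h : u ≤ n) : s n u = u := by
  change u + max 0 (min 1 (u - n)) = u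
  rw [max_eq_left]; · simp
  · exact (min_le_right _ _).trans (by linarith)

lemma s_mono {n : ℤ} {u : ℚ} : u ≤ s n u := by
  change u ≤ u + max 0 (min 1 (u - n))
  linarith [le_max_left 0 (min 1 (u - n))]

lemma s_ub {n : ℤ} {u : ℚ} : s n u ≤ u + 1 := by
  change u + max 0 (min 1 (u - n)) ≤ _
  have := max_le (show (0:ℚ) ≤ 1 by norm_num) (min_le_left 1 (u - n))
  linarith

lemma s_ge {n : ℤ} {u : ℚ} (h : n + 1 ≤ u) : s n u = u + 1 := by
  change u + max 0 (min 1 (u - n)) = u + 1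
  rw [min_eq_left (by linarith)]; norm_num

lemma s_lt {n : ℤ} {u : ℚ} (h : n < u) : u < s n u := by
  change u < u + max 0 (min 1 (u - n))
  have : (0:ℚ) < min 1 (u - n) := lt_min (by norm_num) (by linarith)
  linarith [le_max_right 0 (min 1 (u - n))]

lemma s_succ (n : ℤ) (u : ℚ) : s (n + 1) (u + 1) = s n u + 1 := by
  change (u + 1) + max 0 (min 1 (u + 1 - ((n + 1 : ℤ) : ℚ))) = u + max 0 (min 1 (u - n)) + 1
  push_cast
  rw [show u + 1 - ((n : ℚ) + 1) = u - n by ring]; ring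

lemma s_comm {i n : ℤ} (h : i < n) : s i * s n = s (n + 1) * s i := by
  have h' : (i : ℚ) + 1 ≤ n := by exact_mod_cast h
  ext u
  simp only [Equiv.Perm.mul_apply]
  rcases le_total u n with hu | hu
  · rw [s_le hu, s_le (n := n + 1)]
    push_cast; linarith [s_ub (n := i) (u := u)]
  · rw [s_ge (n := i) (u := u) (by linarith), s_succ, s_ge]
    linarith [s_mono (n := n) (u := u)]

def rho : ThompsonF →* Equiv.Perm ℚ :=
  toG (fun n => if n = 0 then Equiv.subRight 1 else (s n)⁻¹) (by
    intro i n h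
    rw [if_neg (show n ≠ 0 by omega), if_neg (show n + 1 ≠ 0 by omega)]
    split_ifs with hi
    · subst hi
      rw [← inv_inj, mul_inv_rev, mul_inv_rev, inv_inv, inv_inv, inv_inv]
      ext u
      have := s_succ n (u - 1)
      simp only [sub_add_cancel] at this
      rw [Nat.cast_succ, this]; rfl
    · rw [← inv_inj, mul_inv_rev, mul_inv_rev, inv_inv, inv_inv, inv_inv, ← mul_assoc,
        mul_inv_eq_iff_eq_mul, s_comm (by omega)]
      push_cast; rfl)

lemma rho_y (i : ℤ) : rho (y i) = (s i)⁻¹ := by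
  have key : ∀ j u, (rho (x 0) ^ (j : ℤ)) u = u - j := by
    have h0 : rho (x 0) = Equiv.subRight 1 := by simp [rho, toG_x]
    intro j
    induction j using Int.induction_on with
    | zero => simp
    | succ k ih =>
      intro u
      rw [zpow_add, zpow_one, Equiv.Perm.mul_apply, ih, h0]; simp; ring
    | pred k ih =>
      intro u
      rw [zpow_sub, zpow_one, Equiv.Perm.mul_apply, ih, h0]
      have : (Equiv.subRight (1:ℚ))⁻¹ u = u + 1 := rfl
      rw [this]; push_cast; ring
  have h1 : rho (x 1) = (s 1)⁻¹ := by simp [rho, toG_x]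
  have sh : ∀ (k n : ℤ) (u : ℚ), s (n + k) (u + k) = s n u + k := by
    intro k
    induction k using Int.induction_on with
    | zero => simp
    | succ k ih =>
      intro n u
      have := s_succ (n + k) (u + (k : ℤ))
      rw [ih] at this
      push_cast at this ⊢
      rw [← add_assoc, ← add_assoc, this]; ring
    | pred k ih =>
      intro n u
      have := s_succ (n + (-k - 1)) (u + (-k - 1))
      rw [show n + (-(k:ℤ) - 1) + 1 = n + -k by ring,
        show u + (-(k:ℚ) - 1) + 1 = u + ((-k : ℤ) : ℚ) by push_cast; ring, ih] at this
      push_cast at this ⊢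
      linarith
  rw [y, map_mul, map_mul, map_zpow, map_zpow, h1, ← inv_inj, inv_inv]
  ext u
  simp only [mul_inv_rev, inv_inv, ← zpow_neg, Equiv.Perm.mul_apply]
  rw [key, key]
  have := sh (i - 1) 1 (u - (i - 1))
  rw [show 1 + (i - 1) = i by ring] at this
  push_cast at this ⊢
  rw [show u - ((i:ℚ) - 1) + (i - 1) = u by ring] at this
  rw [this]
  rw [show u - -(1 - (i : ℚ)) = u - (i - 1) by ring]; ring

lemma rho_le {p} (hp : p ∈ P) (u : ℚ) : rho p u ≤ u := by
  induction hp using Submonoid.closure_induction_left with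
  | one => simp
  | mul_left g hg q _ ih =>
    obtain ⟨j, rfl⟩ := hg
    rw [map_mul, rho_y, Equiv.Perm.mul_apply]
    have := s_mono (n := j) (u := (s j)⁻¹ (rho q u))
    rw [show s j ((s j)⁻¹ (rho q u)) = rho q u from (s j).apply_symm_apply _] at this
    exact this.trans ih

lemma rho_fix {j : ℤ} {p} (hp : p ∈ Pge j) {u : ℚ} (hu : u ≤ j) : rho p u = u := by
  induction hp using Submonoid.closure_induction_left with
  | one => simp
  | mul_left g hg q _ ih =>
    obtain ⟨k, hk, rfl⟩ := hg
    rw [map_mul, rho_y, Equiv.Perm.mul_apply, ih, Equiv.Perm.inv_eq_iff_eq, s_le]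
    have : (j:ℚ) ≤ k := by exact_mod_cast hk
    linarith

lemma y_mul_notMem {i : ℤ} {p} (hp : p ∈ P) : y i * p ∉ Pge (i + 1) := by
  intro h
  have h1 := rho_fix h (u := i + 1) (by push_cast; rfl)
  rw [map_mul, rho_y, Equiv.Perm.mul_apply, Equiv.Perm.inv_eq_iff_eq] at h1
  have h2 := rho_le hp (i + 1)
  have h3 := s_lt (n := i) (u := i + 1) (by linarith)
  linarith

lemma y_mul_inj {i j : ℤ} {p q} (hp : p ∈ Pge i) (hq : q ∈ Pge j) (h : y i * p = y j * q) :
    i = j ∧ p = q := by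
  rcases lt_trichotomy i j with hl | rfl | hl
  · exact (y_mul_notMem (Pge_le _ hp)
      (h ▸ mul_mem (y_Pge (by omega)) (Pge_anti (by omega) hq))).elim
  · exact ⟨rfl, mul_left_cancel h⟩
  · exact (y_mul_notMem (Pge_le _ hq)
      (h ▸ mul_mem (y_Pge (by omega)) (Pge_anti (by omega) hp))).elim

lemma denom1 {p} (hp : p ∈ P) (i : ℤ) : ∃ q ∈ P, (y i)⁻¹ * p * q ∈ P := by
  induction hp using Submonoid.closure_induction_left generalizing i with
  | one => exact ⟨y i, y_P i, by simp⟩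
  | mul_left g hg p hp ih =>
    obtain ⟨n, rfl⟩ := hg
    rcases lt_trichotomy i n with h | rfl | h
    · obtain ⟨q, hq, h2⟩ := ih i
      refine ⟨q, hq, ?_⟩
      rw [← mul_assoc, y_rel' h]
      have := P.mul_mem (y_P (n + 1)) h2
      simpa only [mul_assoc] using this
    · exact ⟨1, one_mem _, by simp only [inv_mul_cancel_left, mul_one]; exact hp⟩
    · obtain ⟨q, hq, h2⟩ := ih (i + 1)
      refine ⟨q, hq, ?_⟩
      rw [← mul_assoc, y_rel'' h]
      have := P.mul_mem (y_P n) h2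
      simpa only [mul_assoc] using this

lemma denom2 {g} (hg : g ∈ K) : ∃ q ∈ P, g * q ∈ P := by
  induction hg using Subgroup.closure_induction_left with
  | one => exact ⟨1, one_mem _, by simp⟩
  | mul_left a ha g hg ih =>
    obtain ⟨i, rfl⟩ := ha
    obtain ⟨q, hq, h⟩ := ih
    exact ⟨q, hq, by rw [mul_assoc]; exact mul_mem (y_P i) h⟩
  | inv_mul_cancel a ha g hg ih =>
    obtain ⟨i, rfl⟩ := ha
    obtain ⟨q, hq, h⟩ := ih
    obtain ⟨q', hq', h'⟩ := denom1 h i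
    exact ⟨q * q', mul_mem hq hq', by simpa only [mul_assoc] using h'⟩

lemma denom3 (S : Finset K) : ∃ h ∈ P, ∀ g ∈ S, (g : ThompsonF) * h ∈ P := by
  classical
  induction S using Finset.induction_on with
  | empty => exact ⟨1, one_mem _, by simp⟩
  | insert a S _ ih =>
    obtain ⟨h, hh, H⟩ := ih
    obtain ⟨q, hq, H'⟩ := denom2 (K.mul_mem a.2 (P_le hh))
    refine ⟨h * q, mul_mem hh hq, ?_⟩
    intro g hg
    rcases Finset.mem_insert.1 hg with rfl | hg
    · simpa only [mul_assoc] using H'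
    · rw [← mul_assoc]; exact mul_mem (H g hg) hq

/-- integer degree -/
def deg (g : ThompsonF) : ℤ := Multiplicative.toAdd (dg g)

lemma deg_mul (a b) : deg (a * b) = deg a + deg b := by simp [deg]
lemma deg_y (i) : deg (y i) = 1 := by simp [deg, dg_y]
lemma deg_one : deg 1 = 0 := by simp [deg]
lemma deg_nonneg {p} (hp : p ∈ P) : 0 ≤ deg p := by
  induction hp using Submonoid.closure_induction_left with
  | one => simp [deg]
  | mul_left g hg q _ ih => obtain ⟨j, rfl⟩ := hg; rw [deg_mul, deg_y]; omega

end TF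

namespace TF
noncomputable section

def yK (i : ℤ) : K := ⟨y i, y_mem i⟩

lemma yK_rel {i n : ℤ} (h : i < n) : yK n * yK i = yK i * yK (n + 1) := Subtype.ext (y_rel h)

abbrev Cell := List ℤ × K
abbrev CC := Cell →₀ ℤ

def consF (a : ℤ) (c : Cell) : Cell := (a :: c.1, c.2)
def shF (a : ℤ) (c : Cell) : Cell := (c.1.map (· - 1), yK a * c.2)
def trF (h : K) (c : Cell) : Cell := (c.1, c.2 * h)

def consL (a : ℤ) : CC →ₗ[ℤ] CC := Finsupp.lmapDomain ℤ ℤ (consF a)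
def shL (a : ℤ) : CC →ₗ[ℤ] CC := Finsupp.lmapDomain ℤ ℤ (shF a)
def trL (h : K) : CC →ₗ[ℤ] CC := Finsupp.lmapDomain ℤ ℤ (trF h)

@[simp] lemma consL_single (a c k) : consL a (Finsupp.single c k) = Finsupp.single (consF a c) k := by
  simp [consL]
@[simp] lemma shL_single (a c k) : shL a (Finsupp.single c k) = Finsupp.single (shF a c) k := by
  simp [shL]
@[simp] lemma trL_single (a c k) : trL a (Finsupp.single c k) = Finsupp.single (trF a c) k := by
  simp [trL]

def dcell : List ℤ → K → CC
  | [], _ => 0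
  | a :: l, κ => Finsupp.single (l, κ) 1 - Finsupp.single (l.map (· - 1), yK a * κ) 1
      - consL a (dcell l κ)

def dL : CC →ₗ[ℤ] CC := Finsupp.lsum ℤ (fun c => LinearMap.toSpanSingleton ℤ CC (dcell c.1 c.2))

@[simp] lemma dL_single (c k) : dL (Finsupp.single c k) = k • dcell c.1 c.2 := by
  simp [dL]

lemma dL_cons (a : ℤ) : dL ∘ₗ consL a = LinearMap.id - shL a - consL a ∘ₗ dL := by
  ext c : 2
  simp [consF, shF, dcell]

def Srt (l : List ℤ) : Prop := l.Pairwise (fun a b => a + 2 ≤ b)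

lemma sh_cons (a b : ℤ) : shL a ∘ₗ consL b = consL (b - 1) ∘ₗ shL a := by
  ext c : 2
  simp [consF, shF]

lemma d_sh_cell (a : ℤ) (l : List ℤ) (κ : K) (hl : ∀ b ∈ l, a + 2 ≤ b) :
    dL (shL a (Finsupp.single (l, κ) 1)) = shL a (dL (Finsupp.single (l, κ) 1)) := by
  induction l with
  | nil => simp [shF, dcell]
  | cons b l ih =>
    have hb : a + 2 ≤ b := hl b (by simp)
    have ih := ih (fun b hb => hl b (by simp [hb]))
    simp only [shL_single, dL_single, one_smul, shF] at ih ⊢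
    simp only [List.map_cons, dcell, ih, map_sub, shL_single, shF]
    have e := LinearMap.congr_fun (sh_cons a b) (dcell l κ)
    simp only [LinearMap.comp_apply] at e
    rw [e]
    have := yK_rel (show a < b - 1 by omega)
    rw [sub_add_cancel] at this
    rw [← mul_assoc, ← mul_assoc, this]

lemma d_sh (a : ℤ) (z : CC) (hz : ∀ c ∈ z.support, ∀ b ∈ c.1, a + 2 ≤ b) :
    dL (shL a z) = shL a (dL z) := by
  classical
  have : z = z.sum (fun c k => k • Finsupp.single c 1) := by
    conv_lhs => rw [← Finsupp.sum_single z]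
    simp
  rw [this, Finsupp.sum]
  simp only [map_sum, map_smul]
  exact Finset.sum_congr rfl fun c hc => by rw [← d_sh_cell a c.1 c.2 (hz c hc)]

lemma dcell_supp (a : ℤ) (l : List ℤ) (κ : K) (hs : Srt l) (hl : ∀ b ∈ l, a ≤ b)
    (c : Cell) (hc : c ∈ (dcell l κ).support) :
    Srt c.1 ∧ c.1.length + 1 = l.length ∧ (∀ b ∈ c.1, a ≤ b) ∧
      (c.2 = κ ∨ ∃ i, a ≤ i ∧ c.2 = yK i * κ) := by
  classical
  induction l generalizing a c with
  | nil => simp [dcell] at hc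
  | cons b l ih =>
    have hs' := List.pairwise_cons.1 hs
    have hb : a ≤ b := hl b (by simp)
    rw [dcell] at hc
    have h1 := Finsupp.support_sub hc
    rcases Finset.mem_union.1 h1 with h1 | h1
    · have h1 := Finsupp.support_sub h1
      rcases Finset.mem_union.1 h1 with h1 | h1
      · have := Finsupp.support_single_subset h1
        rw [Finset.mem_singleton] at this
        subst this
        exact ⟨hs'.2, rfl, fun e he => by have := hs'.1 e he; omega, Or.inl rfl⟩
      · have := Finsupp.support_single_subset h1
        rw [Finset.mem_singleton] at this
        subst this
        refine ⟨?_, by simp, ?_, Or.inr ⟨b, hb, rfl⟩⟩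
        · rw [Srt, List.pairwise_map]
          exact hs'.2.imp (by intros; omega)
        · intro e he
          simp only [List.mem_map] at he
          obtain ⟨e', he', rfl⟩ := he
          have := hs'.1 e' he'; omega
    · have := Finsupp.mapDomain_support h1
      obtain ⟨c', hc', rfl⟩ := Finset.mem_image.1 this
      obtain ⟨i1, i2, i3, i4⟩ := ih (b + 2) hs'.2 hs'.1 c' hc'
      refine ⟨List.pairwise_cons.2 ⟨i3, i1⟩, by simp [consF, i2], ?_, ?_⟩
      · intro e he
        simp only [consF, List.mem_cons] at he
        rcases he with rfl | he
        · exact hb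
        · have := i3 e he; omega
      · rcases i4 with h | ⟨i, h, h'⟩
        · exact Or.inl h
        · exact Or.inr ⟨i, by omega, h'⟩

lemma dd_cell (l : List ℤ) (κ : K) (hs : Srt l) : dL (dcell l κ) = 0 := by
  induction l with
  | nil => simp [dcell]
  | cons a l ih =>
    have hs' := List.pairwise_cons.1 hs
    have ih := ih hs'.2
    have h1 := LinearMap.congr_fun (dL_cons a) (dcell l κ)
    simp only [LinearMap.comp_apply, LinearMap.sub_apply, LinearMap.id_apply, ih, map_zero] at h1
    have h2 := d_sh_cell a l κ hs'.1
    simp only [shL_single, dL_single, one_smul, shF] at h2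
    rw [dcell, map_sub, map_sub, h1, dL_single, dL_single]
    simp [h2]

def Sn (n : ℕ) : Submodule ℤ CC := Finsupp.supported ℤ ℤ {c | Srt c.1 ∧ c.1.length = n}

lemma supp_ind {S : Set Cell} {Q : CC → Prop} (h0 : Q 0) (ha : ∀ u v, Q u → Q v → Q (u + v))
    (hm : ∀ (k : ℤ) u, Q u → Q (k • u)) (hs : ∀ c ∈ S, Q (Finsupp.single c 1)) {z : CC}
    (hz : z ∈ Finsupp.supported ℤ ℤ S) : Q z := by
  rw [Finsupp.supported_eq_span_single] at hz
  induction hz using Submodule.span_induction with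
  | mem u hu => obtain ⟨c, hc, rfl⟩ := hu; exact hs c hc
  | zero => exact h0
  | add u v _ _ hu hv => exact ha u v hu hv
  | smul k u _ hu => exact hm k u hu

lemma d_mem {n : ℕ} {z : CC} (hz : z ∈ Sn (n + 1)) : dL z ∈ Sn n := by
  refine supp_ind (Q := fun z => dL z ∈ Sn n) (by simp) ?_ ?_ ?_ hz
  · intro u v hu hv; rw [map_add]; exact add_mem hu hv
  · intro k u hu; rw [map_smul]; exact Submodule.smul_mem _ _ hu
  · rintro ⟨l, κ⟩ ⟨h1, h2⟩
    rw [dL_single, one_smul]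
    intro c hc
    obtain ⟨a, ha⟩ : ∃ a : ℤ, ∀ b ∈ l, a ≤ b := by
      cases l with
      | nil => exact ⟨0, by simp⟩
      | cons b l =>
        refine ⟨b, fun e he => ?_⟩
        rcases List.mem_cons.1 he with rfl | he
        · exact le_rfl
        · have := (List.pairwise_cons.1 h1).1 e he; omega
    obtain ⟨i1, i2, _⟩ := dcell_supp a l κ h1 ha c hc
    simp only at h2
    exact ⟨i1, by omega⟩

lemma dd {n : ℕ} {z : CC} (hz : z ∈ Sn n) : dL (dL z) = 0 := by
  refine supp_ind (Q := fun z => dL (dL z) = 0) (by simp) ?_ ?_ ?_ hz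
  · intro u v hu hv; simp [hu, hv]
  · intro k u hu; simp [hu]
  · rintro ⟨l, κ⟩ ⟨h1, h2⟩
    simp [dd_cell l κ h1]

def augL : CC →ₗ[ℤ] ℤ := Finsupp.lsum ℤ (fun _ => LinearMap.id)

@[simp] lemma augL_single (c k) : augL (Finsupp.single c k) = k := by simp [augL]

lemma aug_d {z : CC} (hz : z ∈ Sn 1) : augL (dL z) = 0 := by
  refine supp_ind (Q := fun z => augL (dL z) = 0) (by simp) ?_ ?_ ?_ hz
  · intro u v hu hv; simp [hu, hv]
  · intro k u hu; simp [hu]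
  · rintro ⟨l, κ⟩ ⟨h1, h2⟩
    obtain ⟨a, rfl⟩ := List.length_eq_one_iff.1 h2
    simp [dcell]

lemma tr_cell (h : K) (l : List ℤ) (κ : K) : trL h (dcell l κ) = dcell l (κ * h) := by
  induction l generalizing κ with
  | nil => simp [dcell]
  | cons a l ih =>
    have e : trL h ∘ₗ consL a = consL a ∘ₗ trL h := by ext c : 2; simp [consF, trF]
    have e := LinearMap.congr_fun e (dcell l κ)
    simp only [LinearMap.comp_apply] at e
    simp only [dcell, map_sub, e, ih, trL_single, trF, mul_assoc]

lemma tr_d (h : K) (z : CC) : trL h (dL z) = dL (trL h z) := by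
  have : trL h ∘ₗ dL = dL ∘ₗ trL h := by
    ext c : 2
    simp [tr_cell, trF]
  exact LinearMap.congr_fun this z

lemma tr_mul (g h : K) (z : CC) : trL g (trL h z) = trL (h * g) z := by
  have : trL g ∘ₗ trL h = trL (h * g) := by
    ext c : 2
    simp [trF, mul_assoc]
  exact LinearMap.congr_fun this z

lemma tr_one (z : CC) : trL 1 z = z := by
  have : trL 1 = LinearMap.id := by
    ext c : 2
    simp [trF]
  exact LinearMap.congr_fun this z

lemma tr_mem (h : K) {n : ℕ} {z : CC} (hz : z ∈ Sn n) : trL h z ∈ Sn n := by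
  refine supp_ind (Q := fun z => trL h z ∈ Sn n) (by simp) ?_ ?_ ?_ hz
  · intro u v hu hv; rw [map_add]; exact add_mem hu hv
  · intro k u hu; rw [map_smul]; exact Submodule.smul_mem _ _ hu
  · rintro ⟨l, κ⟩ h
    rw [trL_single]
    exact Finsupp.single_mem_supported _ _ h

lemma aug_tr (h : K) (z : CC) : augL (trL h z) = augL z := by
  have : augL ∘ₗ trL h = augL := by
    ext c
    simp
  exact LinearMap.congr_fun this z

def isD : Cell → Prop
  | ([], p) => p = 1
  | (a :: _, p) => (p : ThompsonF) ∈ Pge a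

def Dn (n : ℕ) : Submodule ℤ CC :=
  Finsupp.supported ℤ ℤ {c | (Srt c.1 ∧ c.1.length = n) ∧ isD c}

lemma propA_cell (N : ℕ) : ∀ (l : List ℤ) (p : K), Srt l → (p : ThompsonF) ∈ P → deg p = N →
    ∃ u ∈ Sn (l.length + 1), Finsupp.single (l, p) 1 - dL u ∈ Dn l.length := by
  induction N with
  | zero =>
    intro l p hl hp hd
    refine ⟨0, zero_mem _, ?_⟩
    rw [map_zero, sub_zero]
    refine Finsupp.single_mem_supported _ _ ⟨⟨hl, rfl⟩, ?_⟩
    have hp1 : (p : ThompsonF) = 1 := by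
      rcases P_cases hp with h | ⟨i, q, hq, h⟩
      · exact h
      · rw [h, deg_mul, deg_y] at hd
        have := deg_nonneg (Pge_le _ hq)
        push_cast at hd; omega
    cases l with
    | nil => exact Subtype.ext hp1
    | cons a l => change (p : ThompsonF) ∈ Pge a; rw [hp1]; exact one_mem _
  | succ N ih =>
    intro l p hl hp hd
    rcases P_cases hp with h | ⟨i, q, hq, h⟩
    · rw [h, deg_one] at hd; push_cast at hd; omega
    · have hdq : deg q = N := by rw [h, deg_mul, deg_y] at hd; push_cast at hd; omega
      let q' : K := ⟨q, P_le (Pge_le _ hq)⟩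
      have hpq : p = yK i * q' := Subtype.ext h
      cases l with
      | nil =>
        obtain ⟨u, hu, hu'⟩ := ih [] q' hl (Pge_le _ hq) hdq
        refine ⟨u - Finsupp.single ([i], q') 1, sub_mem hu
          (Finsupp.single_mem_supported _ _ ⟨by simp [Srt], rfl⟩), ?_⟩
        convert hu' using 1
        simp [dcell, hpq]
        abel
      | cons a t =>
        by_cases hai : a ≤ i
        · refine ⟨0, zero_mem _, ?_⟩
          rw [map_zero, sub_zero]
          refine Finsupp.single_mem_supported _ _ ⟨⟨hl, rfl⟩, ?_⟩
          change (p : ThompsonF) ∈ Pge a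
          rw [h]; exact mul_mem (y_Pge hai) (Pge_anti hai hq)
        · set l := a :: t with hldef
          have hall : ∀ b ∈ l, a ≤ b := by
            intro e he
            rcases List.mem_cons.1 he with rfl | he
            · exact le_rfl
            · have := (List.pairwise_cons.1 hl).1 e he; omega
          set l1 := l.map (· + 1) with hl1
          have hl1len : l1.length = l.length := by simp [hl1]
          have hs1 : Srt l1 := by
            rw [Srt, hl1, List.pairwise_map]
            exact hl.imp (by intros; omega)
          have hge : ∀ b ∈ l1, i + 2 ≤ b := by
            intro b hb
            obtain ⟨b', hb', rfl⟩ := List.mem_map.1 hb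
            have := hall b' hb'; omega
          have hback : l1.map (· - 1) = l := by simp [hl1, Function.comp_def]
          obtain ⟨u, hu, hu'⟩ := ih l1 q' hs1 (Pge_le _ hq) hdq
          rw [hl1len] at hu hu'
          refine ⟨u - Finsupp.single (i :: l1, q') 1, sub_mem hu
            (Finsupp.single_mem_supported _ _ ⟨List.pairwise_cons.2 ⟨hge, hs1⟩, by simp [hl1len]⟩), ?_⟩
          have hmem : consL i (dcell l1 q') ∈ Dn l.length := by
            intro c hc
            classical
            have := Finsupp.mapDomain_support hc
            obtain ⟨c', hc', rfl⟩ := Finset.mem_image.1 this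
            obtain ⟨i1, i2, i3, i4⟩ := dcell_supp (i + 2) l1 q' hs1 hge c' hc'
            refine ⟨⟨List.pairwise_cons.2 ⟨i3, i1⟩, by simp [consF]; omega⟩, ?_⟩
            change (c'.2 : ThompsonF) ∈ Pge i
            rcases i4 with h4 | ⟨j, hj, h4⟩
            · rw [h4]; exact hq
            · rw [h4]; exact mul_mem (y_Pge (by omega)) hq
          have := sub_mem hu' hmem
          convert this using 1
          simp only [map_sub, dL_single, one_smul, dcell, hback, ← hpq]
          abel

lemma propA {n : ℕ} {z : CC} (hz : z ∈ Sn n) (hP : ∀ c ∈ z.support, (c.2 : ThompsonF) ∈ P) :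
    ∃ u ∈ Sn (n + 1), z - dL u ∈ Dn n := by
  have hz' : z ∈ Finsupp.supported ℤ ℤ
      {c : Cell | (Srt c.1 ∧ c.1.length = n) ∧ (c.2 : ThompsonF) ∈ P} :=
    fun c hc => ⟨hz hc, hP c hc⟩
  refine supp_ind (Q := fun z => ∃ u ∈ Sn (n + 1), z - dL u ∈ Dn n) ?_ ?_ ?_ ?_ hz'
  · exact ⟨0, by simp, by simp⟩
  · rintro u v ⟨u', h1, h2⟩ ⟨v', h3, h4⟩
    refine ⟨u' + v', add_mem h1 h3, ?_⟩
    convert add_mem h2 h4 using 1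
    rw [map_add]; abel
  · rintro k u ⟨u', h1, h2⟩
    refine ⟨k • u', Submodule.smul_mem _ _ h1, ?_⟩
    rw [map_smul, ← smul_sub]; exact Submodule.smul_mem _ _ h2
  · rintro ⟨l, κ⟩ ⟨⟨h1, rfl⟩, h2⟩
    exact propA_cell (deg κ).toNat l κ h1 h2 (by rw [Int.toNat_of_nonneg (deg_nonneg h2)])

lemma propB {n : ℕ} {z : CC} (hz : z ∈ Dn (n + 1)) (hd : dL z = 0) : z = 0 := by
  classical
  by_contra hne
  obtain ⟨c0, hc0, hmax⟩ := Finset.exists_max_image z.support (fun c => deg c.2)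
    (Finsupp.support_nonempty_iff.2 hne)
  obtain ⟨l, p⟩ := c0
  obtain ⟨⟨hs, hlen⟩, hD⟩ := hz hc0
  cases l with
  | nil => simp at hlen
  | cons a t =>
  change (p : ThompsonF) ∈ Pge a at hD
  set e : Cell := (t.map (· - 1), yK a * p) with he
  have hsum : (dL z) e = ∑ c ∈ z.support, z c * (dcell c.1 c.2) e := by
    simp [dL, Finsupp.sum, Finsupp.finsetSum_apply]
  have hat : ∀ b ∈ t.map (· - 1), a + 1 ≤ b := by
    intro b hb
    obtain ⟨b', hb', rfl⟩ := List.mem_map.1 hb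
    have := (List.pairwise_cons.1 hs).1 b' hb'; omega
  have key : ∀ c ∈ z.support, (dcell c.1 c.2) e = if c = (a :: t, p) then -1 else 0 := by
    rintro ⟨l', p'⟩ hc
    obtain ⟨⟨hs', hlen'⟩, hD'⟩ := hz hc
    cases l' with
    | nil => simp at hlen'
    | cons a' t' =>
    change (p' : ThompsonF) ∈ Pge a' at hD'
    have hdeg := hmax _ hc
    simp only at hdeg
    have h1 : (Finsupp.single (t', p') (1:ℤ)) e = 0 := by
      rw [Finsupp.single_apply, if_neg]
      intro h
      have := congrArg Prod.snd h
      simp only [he] at this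
      rw [this, Subgroup.coe_mul, deg_mul] at hdeg
      simp only [yK, deg_y] at hdeg
      omega
    have h3 : (consL a' (dcell t' p')) e = 0 := by
      by_contra h
      have := Finsupp.mapDomain_support (Finsupp.mem_support_iff.2 h)
      obtain ⟨c', hc', hce⟩ := Finset.mem_image.1 this
      have hs'' := List.pairwise_cons.1 hs'
      obtain ⟨i1, i2, i3, i4⟩ := dcell_supp (a' + 2) t' p' hs''.2 hs''.1 c' hc'
      have e1 := congrArg Prod.fst hce
      have e2 := congrArg Prod.snd hce
      simp only [he, consF] at e1 e2
      have ha' : a + 1 ≤ a' := hat a' (by rw [← e1]; simp)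
      have hm : (c'.2 : ThompsonF) ∈ Pge a' := by
        rcases i4 with h4 | ⟨j, hj, h4⟩
        · rw [h4]; exact hD'
        · rw [h4]; exact mul_mem (y_Pge (by omega)) hD'
      rw [e2] at hm
      exact y_mul_notMem (Pge_le _ hD) (Pge_anti ha' hm)
    simp only [dcell, Finsupp.sub_apply, h1, h3]
    rw [Finsupp.single_apply]
    have : ((t'.map (· - 1), yK a' * p') = e) ↔ ((a' :: t', p') : Cell) = (a :: t, p) := by
      constructor
      · intro h
        have e1 := congrArg Prod.fst h
        have e2 := congrArg (fun c : Cell => (c.2 : ThompsonF)) h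
        simp only [he] at e1 e2
        obtain ⟨rfl, e3⟩ := y_mul_inj hD' hD e2
        have : Function.Injective (fun b : ℤ => b - 1) := fun u v h => by simpa using h
        have := List.map_injective_iff.2 this e1
        rw [this, Subtype.ext e3]
      · intro h
        simp only [Prod.mk.injEq, List.cons.injEq] at h
        obtain ⟨⟨rfl, rfl⟩, rfl⟩ := h
        rfl
    simp only [this]
    split_ifs <;> simp
  rw [hd, Finset.sum_congr rfl (fun c hc => by rw [key c hc])] at hsum
  simp only [mul_ite, mul_neg, mul_one, mul_zero, Finset.sum_ite_eq', Finsupp.coe_zero,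
    Pi.zero_apply, hc0, if_true] at hsum
  exact Finsupp.mem_support_iff.1 hc0 (by omega)

lemma common (z : CC) : ∃ h : K, ∀ c ∈ (trL h z).support, (c.2 : ThompsonF) ∈ P := by
  classical
  obtain ⟨h, hh, H⟩ := denom3 (z.support.image Prod.snd)
  refine ⟨⟨h, P_le hh⟩, fun c hc => ?_⟩
  have := Finsupp.mapDomain_support hc
  obtain ⟨c', hc', rfl⟩ := Finset.mem_image.1 this
  exact H c'.2 (Finset.mem_image_of_mem _ hc')

lemma exact_pos {n : ℕ} {z : CC} (hz : z ∈ Sn (n + 1)) (hd : dL z = 0) :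
    ∃ u ∈ Sn (n + 2), dL u = z := by
  obtain ⟨h, hh⟩ := common z
  obtain ⟨u, hu, hu'⟩ := propA (tr_mem h hz) hh
  have h0 : dL (trL h z - dL u) = 0 := by rw [map_sub, dd hu, ← tr_d, hd]; simp
  have := propB hu' h0
  refine ⟨trL h⁻¹ u, tr_mem _ hu, ?_⟩
  rw [← tr_d, ← sub_eq_zero.1 this, tr_mul, mul_inv_cancel, tr_one]

lemma exact_zero {z : CC} (hz : z ∈ Sn 0) (ha : augL z = 0) : ∃ u ∈ Sn 1, dL u = z := by
  classical
  obtain ⟨h, hh⟩ := common z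
  obtain ⟨u, hu, hu'⟩ := propA (tr_mem h hz) hh
  have h0 : augL (trL h z - dL u) = 0 := by rw [map_sub, aug_d hu, aug_tr, ha]; simp
  have : trL h z - dL u = 0 := by
    set v := trL h z - dL u
    have hv : v = Finsupp.single ([], 1) (v ([], 1)) := by
      ext c
      rw [Finsupp.single_apply]
      split_ifs with hc
      · rw [hc]
      · by_contra hne
        obtain ⟨⟨_, h2⟩, h3⟩ := hu' (Finsupp.mem_support_iff.2 hne)
        obtain ⟨l, p⟩ := c
        simp only [List.length_eq_zero_iff] at h2
        subst h2
        change p = 1 at h3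
        exact hc (by rw [h3])
    rw [hv, augL_single] at h0
    rw [hv, h0, Finsupp.single_zero]
  refine ⟨trL h⁻¹ u, tr_mem _ hu, ?_⟩
  rw [← tr_d, ← sub_eq_zero.1 this, tr_mul, mul_inv_cancel, tr_one]

end
end TF

namespace TF
noncomputable section

structure BM (V : Type) [AddCommGroup V] where
  L : ℕ → V →+ V
  R : ℕ → V →+ V
  LL : ∀ h g v, L h (L g v) = L (h + g + 1) v - L (h + g + 2) v
  RR : ∀ h g v, R h (R g v) = R (h + g + 1) v - R (h + g + 2) v
  LR : ∀ h g v, L h (R g v) = R g (L h v)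

variable {VA VB VQ : Type} [AddCommGroup VA] [AddCommGroup VB] [AddCommGroup VQ]

def rt (R : BM VB) : List ℕ → (List ℕ → VB) → ℕ → VB
  | [], f, h => R.R h (f [])
  | g :: t, f, h => f ((h + g + 1) :: t) - f ((h + g + 2) :: t) - rt R t (fun s => f (h :: s)) g

def del (B : BM VB) (f : List ℕ → VB) : List ℕ → VB
  | [] => 0
  | h :: t => B.L h (f t) - rt B t f h

lemma rt_map {A : BM VA} {B : BM VB} (m : VA →+ VB) (hm : ∀ h v, m (A.R h v) = B.R h (m v))
    (t : List ℕ) (f : List ℕ → VA) (h : ℕ) : m (rt A t f h) = rt B t (fun s => m (f s)) h := by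
  induction t generalizing f h with
  | nil => simp [rt, hm]
  | cons g t ih => simp only [rt, map_sub, ih]

lemma rt_congr {B : BM VB} (t : List ℕ) (f f' : List ℕ → VB) (h : ℕ)
    (H : ∀ s : List ℕ, s.length = t.length → f s = f' s) : rt B t f h = rt B t f' h := by
  induction t generalizing f f' h with
  | nil => simp only [rt]; rw [H _ rfl]
  | cons g t ih =>
    simp only [rt]
    rw [H _ (by simp), H _ (by simp), ih _ (fun s => f' (h :: s)) g (fun s hs => H _ (by simp [hs]))]

lemma rt_sub {B : BM VB} (t : List ℕ) (f f' : List ℕ → VB) (h : ℕ) :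
    rt B t (fun s => f s - f' s) h = rt B t f h - rt B t f' h := by
  induction t generalizing f f' h with
  | nil => simp [rt]
  | cons g t ih => simp only [rt, ih]; abel

lemma rt_rt {B : BM VB} (t : List ℕ) (f : List ℕ → VB) (h g : ℕ) :
    rt B t (fun s => rt B s f h) g = rt B t f (h + g + 1) - rt B t f (h + g + 2) := by
  induction t generalizing f h g with
  | nil => simp only [rt, B.RR]; rw [add_comm g h]
  | cons k t ih =>
    simp only [rt, rt_sub, ih]
    have e : ∀ n, h + (g + k + n) = h + g + n + k := by intro n; omega
    simp only [show h + (g + k + 1) + 1 = h + g + 1 + k + 1 by omega,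
      show h + (g + k + 1) + 2 = h + g + 1 + k + 2 by omega,
      show h + (g + k + 2) + 1 = h + g + 2 + k + 1 by omega,
      show h + (g + k + 2) + 2 = h + g + 2 + k + 2 by omega]
    abel

lemma del_del {B : BM VB} (f : List ℕ → VB) (t : List ℕ) : del B (del B f) t = 0 := by
  rcases t with _ | ⟨h, _ | ⟨g, t⟩⟩
  · rfl
  · simp [del, rt]
  · simp only [del, rt, map_sub, B.LL, rt_sub, rt_rt]
    rw [rt_map (A := B) (B := B) (B.L h) (fun k v => B.LR h k v)]
    abel

lemma del_map {A : BM VA} {B : BM VB} (m : VA →+ VB) (hL : ∀ h v, m (A.L h v) = B.L h (m v))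
    (hR : ∀ h v, m (A.R h v) = B.R h (m v))
    (f : List ℕ → VA) (t : List ℕ) : m (del A f t) = del B (fun s => m (f s)) t := by
  cases t with
  | nil => simp [del]
  | cons h t => simp [del, hL, rt_map m hR]

lemma del_sub {B : BM VB} (f f' : List ℕ → VB) (t : List ℕ) :
    del B (fun s => f s - f' s) t = del B f t - del B f' t := by
  cases t with
  | nil => simp [del]
  | cons h t => simp only [del, rt_sub, map_sub]; abel

lemma del_zsmul {B : BM VB} (c : ℤ) (f : List ℕ → VB) (t : List ℕ) :
    del B (fun s => c • f s) t = c • del B f t :=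
  (del_map (A := B) (B := B) (zsmulAddGroupHom c) (by simp) (by simp) f t).symm

lemma del_congr {B : BM VB} {k : ℕ} {f f' : List ℕ → VB}
    (H : ∀ s : List ℕ, s.length = k → f s = f' s) (t : List ℕ) (ht : t.length = k + 1) :
    del B f t = del B f' t := by
  cases t with
  | nil => simp at ht
  | cons h t =>
    simp only [List.length_cons, add_left_inj] at ht
    simp only [del]
    rw [H t ht, rt_congr t f f' h (by rwa [ht])]

def Zc (B : BM VB) (k : ℕ) (f : List ℕ → VB) : Prop := ∀ t, t.length = k + 1 → del B f t = 0
def Bd (B : BM VB) (k : ℕ) (f : List ℕ → VB) : Prop := ∃ u, ∀ t, t.length = k → f t = del B u t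
def Acyc (B : BM VB) (k : ℕ) : Prop := ∀ f, Zc B k f → Bd B k f
def Cyc (B : BM VB) (k : ℕ) : Prop := ∃ e, Zc B k e ∧
  (∀ f, Zc B k f → ∃ c : ℤ, Bd B k (fun s => f s - c • e s)) ∧
  (∀ c : ℤ, Bd B k (fun s => c • e s) → c = 0)

structure SES (A : BM VA) (B : BM VB) (Q : BM VQ) where
  i : VA →+ VB
  p : VB →+ VQ
  σ : VQ → VB
  iL : ∀ h v, i (A.L h v) = B.L h (i v)
  iR : ∀ h v, i (A.R h v) = B.R h (i v)
  pL : ∀ h v, p (B.L h v) = Q.L h (p v)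
  pR : ∀ h v, p (B.R h v) = Q.R h (p v)
  inj : ∀ v, i v = 0 → v = 0
  pσ : ∀ v, p (σ v) = v
  ex : ∀ b, p b = 0 → ∃ a, i a = b
  pi : ∀ a, p (i a) = 0

lemma snake {A : BM VA} {B : BM VB} {Q : BM VQ} (S : SES A B Q) {k : ℕ} {F : List ℕ → VA} {u e g v}
    (hg : Zc B k g)
    (hu : ∀ t, t.length = k + 1 → S.i (F t) = del B u t)
    (hp : ∀ t, t.length = k → S.p (u t) - S.p (e t) - S.p (g t) = del Q v t) :
    ∃ w, ∀ t, t.length = k + 1 → S.i (F t) - del B e t = S.i (del A w t) := by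
  set u' : List ℕ → VB := fun s => (u s - e s - g s) - del B (fun s => S.σ (v s)) s with hu'
  have h0 : ∀ t, t.length = k → S.p (u' t) = 0 := by
    intro t ht
    have := del_map S.p S.pL S.pR (fun s => S.σ (v s)) t
    simp only [S.pσ] at this
    rw [hu']
    simp only [map_sub, this]
    rw [hp t ht, sub_self]
  have h1 : ∀ t, ∃ a, t.length = k → S.i a = u' t := by
    intro t
    by_cases ht : t.length = k
    · obtain ⟨a, ha⟩ := S.ex _ (h0 t ht); exact ⟨a, fun _ => ha⟩
    · exact ⟨0, fun h => (ht h).elim⟩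
  choose w hw using h1
  refine ⟨w, fun t ht => ?_⟩
  rw [del_map S.i S.iL S.iR, del_congr (f' := u') (fun s hs => hw s hs) t ht, hu', del_sub, del_sub,
    del_sub, del_del, hg t ht, hu t ht]
  abel

lemma snakeZ {A : BM VA} {B : BM VB} {Q : BM VQ} (S : SES A B Q) {k : ℕ} {F : List ℕ → VA} {u}
    (hu : ∀ t, t.length = k + 1 → S.i (F t) = del B u t) : Zc Q k (fun s => S.p (u s)) := by
  intro t ht
  rw [← del_map S.p S.pL S.pR, ← hu t ht, S.pi]

lemma iZ {A : BM VA} {B : BM VB} {Q : BM VQ} (S : SES A B Q) {k : ℕ} {F : List ℕ → VA} (hF : Zc A k F) :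
    Zc B k (fun s => S.i (F s)) := by
  intro t ht
  rw [← del_map S.i S.iL S.iR, hF t ht, map_zero]

lemma i_inj {A : BM VA} {B : BM VB} {Q : BM VQ} (S : SES A B Q) {a b} (h : S.i a = S.i b) : a = b := by
  have := S.inj (a - b) (by rw [map_sub, h, sub_self])
  exact sub_eq_zero.1 this

lemma zero_Z (B : BM VB) (k : ℕ) : Zc B k (fun _ => 0) := by
  intro t _
  have := del_sub (B := B) (fun _ => 0) (fun _ => 0) t
  simpa using this

lemma acyc_step {A : BM VA} {B : BM VB} {Q : BM VQ} (S : SES A B Q) {k : ℕ} (hB : Acyc B (k + 1))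
    (H : ∀ f, Zc Q k f → ∃ g, Zc B k g ∧ Bd Q k (fun s => f s - S.p (g s))) : Acyc A (k + 1) := by
  intro F hF
  obtain ⟨u, hu⟩ := hB _ (iZ S hF)
  obtain ⟨g, hg, v, hv⟩ := H _ (snakeZ S hu)
  obtain ⟨w, hw⟩ := snake S (e := fun _ => 0) (v := v) hg hu (by simpa using hv)
  refine ⟨w, fun t ht => ?_⟩
  have := hw t ht
  rw [zero_Z B k t ht, sub_zero] at this
  exact i_inj S this

lemma cyc_step {A : BM VA} {B : BM VB} {Q : BM VQ} (S : SES A B Q) {k : ℕ} (hB : Acyc B (k + 1))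
    (e : List ℕ → VQ) (he : Zc Q k e)
    (H1 : ∀ f, Zc Q k f → ∃ c : ℤ, ∃ g, Zc B k g ∧ Bd Q k (fun s => f s - c • e s - S.p (g s)))
    (H2 : ∀ (c : ℤ) g, Zc B k g → Bd Q k (fun s => c • e s - S.p (g s)) → c = 0) :
    Cyc A (k + 1) := by
  have h0 : ∀ t, ∃ a, t.length = k + 1 → S.i a = del B (fun s => S.σ (e s)) t := by
    intro t
    by_cases ht : t.length = k + 1
    · obtain ⟨a, ha⟩ := S.ex (del B (fun s => S.σ (e s)) t) (by
        rw [del_map S.p S.pL S.pR]; simp only [S.pσ]; exact he t ht)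
      exact ⟨a, fun _ => ha⟩
    · exact ⟨0, fun h => (ht h).elim⟩
  choose e' he' using h0
  refine ⟨e', ?_, ?_, ?_⟩
  · intro t ht
    apply S.inj
    rw [del_map S.i S.iL S.iR, del_congr (fun s hs => he' s hs) t ht, del_del]
  · intro F hF
    obtain ⟨u, hu⟩ := hB _ (iZ S hF)
    obtain ⟨c, g, hg, v, hv⟩ := H1 _ (snakeZ S hu)
    obtain ⟨w, hw⟩ := snake S (e := fun s => c • S.σ (e s)) (v := v) hg hu (by
      intro t ht
      rw [map_zsmul, S.pσ]; exact hv t ht)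
    refine ⟨c, w, fun t ht => ?_⟩
    have := hw t ht
    rw [del_zsmul, ← he' t ht, ← map_zsmul, ← map_sub] at this
    exact i_inj S this
  · rintro c ⟨w, hw⟩
    refine H2 c (fun s => c • S.σ (e s) - S.i (w s)) ?_ ⟨fun _ => 0, ?_⟩
    · intro t ht
      rw [del_sub, del_zsmul, ← he' t ht, ← del_map S.i S.iL S.iR, ← hw t ht, map_zsmul, sub_self]
    · intro t ht
      simp only [map_sub, map_zsmul, S.pσ, S.pi, sub_zero, sub_self]
      cases t with
      | nil => rfl
      | cons h t =>
        rw [List.length_cons] at ht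
        obtain ⟨k, rfl⟩ : ∃ j, k = j + 1 := ⟨_, ht.symm⟩
        exact (zero_Z Q k _ (by simpa using ht)).symm

lemma acyc_step' {A : BM VA} {B : BM VB} {Q : BM VQ} (S : SES A B Q) {k : ℕ} (hB : Acyc B (k + 1)) (hQ : Acyc Q k) :
    Acyc A (k + 1) := by
  refine acyc_step S hB fun f hf => ⟨fun _ => 0, zero_Z _ _, ?_⟩
  simpa using hQ f hf

lemma cyc_step' {A : BM VA} {B : BM VB} {Q : BM VQ} (S : SES A B Q) {k : ℕ} (hB : Acyc B (k + 1)) (hB' : Acyc B k)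
    (hQ : Cyc Q k) : Cyc A (k + 1) := by
  obtain ⟨e, he, h1, h2⟩ := hQ
  refine cyc_step S hB e he (fun f hf => ?_) (fun c g hg hc => h2 c ?_)
  · obtain ⟨c, hc⟩ := h1 f hf
    exact ⟨c, fun _ => 0, zero_Z _ _, by simpa using hc⟩
  · obtain ⟨u, hu⟩ := hc
    obtain ⟨v, hv⟩ := hB' g hg
    refine ⟨fun s => u s - (- S.p (v s)), fun t ht => ?_⟩
    have e1 := hu t ht
    have e2 := del_map S.p S.pL S.pR v t
    have e3 := del_zsmul (B := Q) (-1) (fun s => S.p (v s)) t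
    simp only [neg_smul, one_smul] at e3
    rw [del_sub, e3, ← e2, ← hv t ht, ← e1, sub_neg_eq_add, sub_add_cancel]

section concrete
variable {A M : Type} [CommRing A] [AddCommGroup M] [Module A M]

def sm (a : A) : M →+ M := DistribSMul.toAddMonoidHom M a
@[simp] lemma sm_apply (a : A) (m : M) : sm a m = a • m := rfl

/-- the coefficient bimodule `V_t` -/
def Vt (M : Type) [AddCommGroup M] [Module A M] (y t : A) : BM M where
  L h := sm (t ^ (h + 1) - t ^ (h + 2))
  R h := sm (y ^ (h + 1) - y ^ (h + 2))
  LL h g v := by simp only [sm_apply, smul_smul, ← sub_smul]; congr 1; ring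
  RR h g v := by simp only [sm_apply, smul_smul, ← sub_smul]; congr 1; ring
  LR h g v := by simp only [sm_apply, smul_smul]; congr 1; ring

def Ccoind (M : Type) [AddCommGroup M] [Module A M] (y : A) : BM (M × (ℕ → M)) where
  L h := { toFun := fun φ => (φ.2 h, fun g => φ.2 (g + h + 1) - φ.2 (g + h + 2))
           map_zero' := by ext <;> simp
           map_add' := by intro a b; ext <;> simp; abel }
  R h := sm (y ^ (h + 1) - y ^ (h + 2))
  LL h g v := by
    ext k
    · simp
    · simp only [AddMonoidHom.coe_mk, ZeroHom.coe_mk, Prod.snd_sub, Pi.sub_apply]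
      simp only [show k + h + 1 + g + 1 = k + (h + g + 1) + 1 by omega,
        show k + h + 1 + g + 2 = k + (h + g + 1) + 2 by omega,
        show k + h + 2 + g + 1 = k + (h + g + 2) + 1 by omega,
        show k + h + 2 + g + 2 = k + (h + g + 2) + 2 by omega]
  RR h g v := by simp only [sm_apply, smul_smul, ← sub_smul]; congr 1; ring
  LR h g v := by
    ext k
    · simp
    · simp [smul_sub]

lemma C_acyc (y : A) (k : ℕ) : Acyc (Ccoind M y) (k + 1) := by
  intro f hf
  refine ⟨fun t => ((0, fun g => (f (g :: t)).1) : M × (ℕ → M)), fun t ht => ?_⟩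
  cases t with
  | nil => simp at ht
  | cons h t =>
    have fstR := fun (F : List ℕ → M × (ℕ → M)) h => rt_map (A := Ccoind M y) (B := Vt M y y)
      (AddMonoidHom.fst M (ℕ → M)) (fun h v => rfl) t F h
    have sndR := fun (F : List ℕ → M × (ℕ → M)) h g => rt_map (A := Ccoind M y) (B := Vt M y y)
      ((Pi.evalAddMonoidHom (fun _ : ℕ => M) g).comp (AddMonoidHom.snd M (ℕ → M)))
      (fun h v => rfl) t F h
    have z := fun h => rt_map (A := Vt M y y) (B := Vt M y y) 0 (fun h v => by simp) t (fun _ => (0:M)) h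
    apply Prod.ext
    · have e := fstR (fun t => ((0, fun g => (f (g :: t)).1) : M × (ℕ → M))) h
      have z := z h
      change (rt (Ccoind M y) t _ h).1 = rt (Vt M y y) t (fun s => (0:M)) h at e
      have e := e.trans (show _ = (0 : M) from z.symm)
      change (f (h :: t)).1 = (f (h :: t)).1 - (rt (Ccoind M y) t _ h).1
      rw [e, sub_zero]
    · funext g
      have h1 := congrArg Prod.fst (hf (g :: h :: t) (by simp at ht ⊢; exact ht))
      change (f (h :: t)).2 g - ((f ((g + h + 1) :: t)).1 - (f ((g + h + 2) :: t)).1 -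
        (rt (Ccoind M y) t (fun s => f (g :: s)) h).1) = 0 at h1
      change (f (h :: t)).2 g = (f ((g + h + 1) :: t)).1 - (f ((g + h + 2) :: t)).1 -
        (rt (Ccoind M y) t (fun t => ((0, fun g => (f (g :: t)).1) : M × (ℕ → M))) h).2 g
      have e1 := fstR (fun s => f (g :: s)) h
      have e2 := sndR (fun t => ((0, fun g => (f (g :: t)).1) : M × (ℕ → M))) h g
      change (rt (Ccoind M y) t _ h).1 = rt (Vt M y y) t (fun s => (f (g :: s)).1) h at e1
      change (rt (Ccoind M y) t _ h).2 g = rt (Vt M y y) t (fun s => (f (g :: s)).1) h at e2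
      rw [e2, ← e1]
      exact sub_eq_zero.1 h1

end concrete
end
end TF

namespace TF
noncomputable section
section concrete
variable {A M : Type} [CommRing A] [AddCommGroup M] [Module A M]

def Ksub (M : Type) [AddCommGroup M] [Module A M] (w : A) : AddSubgroup (M × (ℕ → M)) where
  carrier := {φ | φ.2 0 = w • φ.1 ∧ ∀ h, φ.2 (h + 2) = φ.2 (h + 1) - w • φ.2 h}
  zero_mem' := by simp
  add_mem' := by
    rintro a b ⟨h1, h2⟩ ⟨h3, h4⟩
    refine ⟨by simp [h1, h3], fun h => ?_⟩
    simp only [Prod.snd_add, Pi.add_apply, h2 h, h4 h, smul_add]; abel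
  neg_mem' := by
    rintro a ⟨h1, h2⟩
    refine ⟨by simp [h1], fun h => ?_⟩
    simp only [Prod.snd_neg, Pi.neg_apply, h2 h, smul_neg]; abel

lemma Ksub_L (y w : A) (h : ℕ) (φ : M × (ℕ → M)) (hφ : φ ∈ Ksub M w) :
    (φ.2 h, fun g => φ.2 (g + h + 1) - φ.2 (g + h + 2)) ∈ Ksub M w := by
  obtain ⟨h1, h2⟩ := hφ
  refine ⟨?_, fun g => ?_⟩
  · simp only [zero_add, h2 h]; abel
  · have a : φ.2 (g + h + 3) = φ.2 (g + h + 2) - w • φ.2 (g + h + 1) := h2 (g + h + 1)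
    have b : φ.2 (g + h + 4) = φ.2 (g + h + 3) - w • φ.2 (g + h + 2) := h2 (g + h + 2)
    simp only
    rw [show g + 2 + h + 1 = g + h + 3 by omega, show g + 2 + h + 2 = g + h + 4 by omega,
      show g + 1 + h + 1 = g + h + 2 by omega, show g + 1 + h + 2 = g + h + 3 by omega, b, a]
    module

lemma Ksub_sm (a w : A) (φ : M × (ℕ → M)) (hφ : φ ∈ Ksub M w) : a • φ ∈ Ksub M w := by
  obtain ⟨h1, h2⟩ := hφ
  refine ⟨?_, fun h => ?_⟩
  · simp only [Prod.smul_snd, Prod.smul_fst, Pi.smul_apply, h1, smul_smul, mul_comm]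
  · simp only [Prod.smul_snd, Pi.smul_apply, h2 h, smul_smul, mul_comm, smul_sub]

def KB (M : Type) [AddCommGroup M] [Module A M] (y w : A) : BM (Ksub M w) where
  L h := (((Ccoind M y).L h).comp (Ksub M w).subtype).codRestrict (Ksub M w)
    (fun φ => Ksub_L y w h φ.1 φ.2)
  R h := (((Ccoind M y).R h).comp (Ksub M w).subtype).codRestrict (Ksub M w)
    (fun φ => Ksub_sm _ w φ.1 φ.2)
  LL h g v := Subtype.ext ((Ccoind M y).LL h g v.1)
  RR h g v := Subtype.ext ((Ccoind M y).RR h g v.1)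
  LR h g v := Subtype.ext ((Ccoind M y).LR h g v.1)

def Psi (M : Type) [AddCommGroup M] [Module A M] (w : A) : M × (ℕ → M) →+ M × (ℕ → M) where
  toFun φ := (φ.2 0 - w • φ.1, fun h => φ.2 (h + 1) - φ.2 (h + 2) - w • φ.2 h)
  map_zero' := by ext <;> simp
  map_add' := by
    intro a b; ext
    · simp; abel
    · simp; abel

def sig (w : A) (ψ : M × (ℕ → M)) : ℕ → M
  | 0 => ψ.1
  | 1 => 0
  | h + 2 => sig w ψ (h + 1) - w • sig w ψ h - ψ.2 h

def ses1 (y w : A) : SES (KB M y w) (Ccoind M y) (Ccoind M y) where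
  i := (Ksub M w).subtype
  p := Psi M w
  σ ψ := (0, sig w ψ)
  iL _ _ := rfl
  iR _ _ := rfl
  pL h v := by
    obtain ⟨v1, v2⟩ := v
    apply Prod.ext
    · change v2 (0 + h + 1) - v2 (0 + h + 2) - w • v2 h = _
      simp only [zero_add]; rfl
    · funext g
      change (v2 (g + 1 + h + 1) - v2 (g + 1 + h + 2)) - (v2 (g + 2 + h + 1) - v2 (g + 2 + h + 2))
        - w • (v2 (g + h + 1) - v2 (g + h + 2)) =
        (v2 (g + h + 1 + 1) - v2 (g + h + 1 + 2) - w • v2 (g + h + 1)) -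
        (v2 (g + h + 2 + 1) - v2 (g + h + 2 + 2) - w • v2 (g + h + 2))
      rw [show g + 2 + h + 1 = g + h + 1 + 2 by omega, show g + 2 + h + 2 = g + h + 2 + 2 by omega,
        show g + 1 + h + 1 = g + h + 1 + 1 by omega, show g + 1 + h + 2 = g + h + 2 + 1 by omega,
        smul_sub]
      abel
  pR h v := by
    obtain ⟨v1, v2⟩ := v
    generalize hr : y ^ (h + 1) - y ^ (h + 2) = r
    apply Prod.ext
    · change (y ^ (h + 1) - y ^ (h + 2)) • v2 0 - w • (y ^ (h + 1) - y ^ (h + 2)) • v1 = (y ^ (h + 1) - y ^ (h + 2)) • (v2 0 - w • v1)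
      rw [hr]; module
    · funext g
      change (y ^ (h + 1) - y ^ (h + 2)) • v2 (g + 1) - (y ^ (h + 1) - y ^ (h + 2)) • v2 (g + 2) - w • (y ^ (h + 1) - y ^ (h + 2)) • v2 g = (y ^ (h + 1) - y ^ (h + 2)) • (v2 (g + 1) - v2 (g + 2) - w • v2 g)
      rw [hr]; module
  inj v hv := Subtype.ext hv
  pσ ψ := by
    apply Prod.ext
    · change sig w ψ 0 - w • (0 : M) = ψ.1
      simp [sig]
    · funext h
      change sig w ψ (h + 1) - sig w ψ (h + 2) - w • sig w ψ h = ψ.2 h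
      rw [show sig w ψ (h + 2) = sig w ψ (h + 1) - w • sig w ψ h - ψ.2 h from rfl]; abel
  ex b hb := by
    refine ⟨⟨b, ?_, fun h => ?_⟩, rfl⟩
    · have := congrArg Prod.fst hb
      exact sub_eq_zero.1 this
    · have := congrFun (congrArg Prod.snd hb) h
      change b.2 (h + 1) - b.2 (h + 2) - w • b.2 h = 0 at this
      rw [sub_right_comm] at this
      exact (sub_eq_zero.1 this).symm
  pi a := by
    obtain ⟨⟨a1, a2⟩, h1, h2⟩ := a
    simp only at h1 h2
    apply Prod.ext
    · change a2 0 - w • a1 = 0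
      rw [h1, sub_self]
    · funext h
      change a2 (h + 1) - a2 (h + 2) - w • a2 h = 0
      rw [h2]; abel

def cst (y : A) (p : M) : M × (ℕ → M) := (p, fun h => (y ^ (h + 1) - y ^ (h + 2)) • p)

lemma Z0_C (y : A) (f) : Zc (Ccoind M y) 0 f ↔ f [] = (cst y (f []).1 : M × (ℕ → M)) := by
  constructor
  · intro hf
    apply Prod.ext
    · rfl
    · funext h
      have := congrArg Prod.fst (hf [h] rfl)
      change (f []).2 h - (y ^ (h + 1) - y ^ (h + 2)) • (f []).1 = 0 at this
      exact sub_eq_zero.1 this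
  · intro hf t ht
    obtain ⟨h, rfl⟩ := List.length_eq_one_iff.1 ht
    simp only [del, rt]
    generalize f [] = φ at hf
    obtain ⟨φ1, φ2⟩ := φ
    have h2 : φ2 = fun h => (y ^ (h + 1) - y ^ (h + 2)) • φ1 := congrArg Prod.snd hf
    subst h2
    apply Prod.ext
    · change (y ^ (h + 1) - y ^ (h + 2)) • φ1 - (y ^ (h + 1) - y ^ (h + 2)) • φ1 = 0
      rw [sub_self]
    · funext g
      change ((y ^ (g + h + 1 + 1) - y ^ (g + h + 1 + 2)) • φ1 - (y ^ (g + h + 2 + 1) - y ^ (g + h + 2 + 2)) • φ1)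
        - (y ^ (h + 1) - y ^ (h + 2)) • (y ^ (g + 1) - y ^ (g + 2)) • φ1 = 0
      rw [smul_smul, ← sub_smul, ← sub_smul]
      convert zero_smul A φ1 using 2
      ring

lemma K_acyc (y w : A) (hs : ∀ m : M, ∃ m', (y - y ^ 2 - w) • m' = m) (k : ℕ) :
    Acyc (KB M y w) (k + 1) := by
  cases k with
  | succ k => exact acyc_step' (ses1 y w) (C_acyc y _) (C_acyc y _)
  | zero =>
    refine acyc_step (ses1 y w) (C_acyc y _) fun f hf => ?_
    obtain ⟨p, hp⟩ := hs (f []).1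
    refine ⟨fun _ => (cst y p : M × (ℕ → M)), ?_, fun _ => 0, ?_⟩
    · rw [Z0_C]; rfl
    · intro t ht
      obtain rfl := List.length_eq_zero_iff.1 ht
      rw [Z0_C] at hf
      change f [] - Psi M w (cst y p) = 0
      rw [sub_eq_zero, hf, ← hp]
      apply Prod.ext
      · change (y - y ^ 2 - w) • p = (y ^ (0 + 1) - y ^ (0 + 2)) • p - w • p
        rw [← sub_smul]; congr 1; ring
      · funext h
        change (y ^ (h + 1) - y ^ (h + 2)) • (y - y ^ 2 - w) • p =
          (y ^ (h + 1 + 1) - y ^ (h + 1 + 2)) • p - (y ^ (h + 2 + 1) - y ^ (h + 2 + 2)) • p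
          - w • (y ^ (h + 1) - y ^ (h + 2)) • p
        rw [smul_smul, smul_smul, ← sub_smul, ← sub_smul]; congr 1; ring

def sig2 (w : A) (m : M) : ℕ → M
  | 0 => 0
  | 1 => m
  | h + 2 => sig2 w m (h + 1) - w • sig2 w m h

lemma K_geom (t : A) (φ : M × (ℕ → M)) (hφ : φ ∈ Ksub M (t - t ^ 2)) (h : ℕ) :
    φ.2 (h + 1) - t • φ.2 h = (1 - t) ^ h • (φ.2 1 - t • φ.2 0) := by
  induction h with
  | zero => simp
  | succ h ih =>
    rw [hφ.2 h, pow_succ' (1 - t) h, mul_smul, ← ih]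
    module

def ses2 (y t : A) : SES (Vt M y t) (KB M y (t - t ^ 2)) (Vt M y (1 - t)) where
  i := AddMonoidHom.codRestrict
    ({ toFun := fun m => (m, fun h => (t ^ h * (t - t ^ 2)) • m)
       map_zero' := by ext <;> simp
       map_add' := by intro a b; ext <;> simp } : M →+ M × (ℕ → M)) (Ksub M (t - t ^ 2)) (by
      intro m
      refine ⟨by simp, fun h => ?_⟩
      change (t ^ (h + 2) * (t - t ^ 2)) • m = (t ^ (h + 1) * (t - t ^ 2)) • m -
        (t - t ^ 2) • (t ^ h * (t - t ^ 2)) • m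
      rw [smul_smul, ← sub_smul]; congr 1; ring)
  p := { toFun := fun φ => φ.1.2 1 - t • φ.1.2 0
         map_zero' := by
          change (0 : M) - t • (0 : M) = 0
          simp
         map_add' := by
          rintro ⟨⟨a1, a2⟩, ha⟩ ⟨⟨b1, b2⟩, hb⟩
          change (a2 1 + b2 1) - t • (a2 0 + b2 0) = (a2 1 - t • a2 0) + (b2 1 - t • b2 0)
          module }
  σ m := (⟨(0, sig2 (t - t ^ 2) m), by simp [sig2], fun h => rfl⟩ : Ksub M (t - t ^ 2))
  iL h v := by
    apply Subtype.ext
    apply Prod.ext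
    · change (t ^ (h + 1) - t ^ (h + 2)) • v = (t ^ h * (t - t ^ 2)) • v
      congr 1; ring
    · funext g
      change (t ^ g * (t - t ^ 2)) • (t ^ (h + 1) - t ^ (h + 2)) • v =
        (t ^ (g + h + 1) * (t - t ^ 2)) • v - (t ^ (g + h + 2) * (t - t ^ 2)) • v
      rw [smul_smul, ← sub_smul]; congr 1; ring
  iR h v := by
    apply Subtype.ext
    apply Prod.ext
    · rfl
    · funext g
      exact smul_comm _ _ _
  pL h v := by
    change (v.1.2 (1 + h + 1) - v.1.2 (1 + h + 2)) - t • (v.1.2 (0 + h + 1) - v.1.2 (0 + h + 2)) =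
      ((1 - t) ^ (h + 1) - (1 - t) ^ (h + 2)) • (v.1.2 1 - t • v.1.2 0)
    have := K_geom t v.1 v.2 h
    rw [show 1 + h + 1 = h + 2 by omega, show 1 + h + 2 = h + 1 + 2 by omega, zero_add,
      v.2.2 (h + 1), v.2.2 h]
    rw [show (1 - t) ^ (h + 1) - (1 - t) ^ (h + 2) = (t - t ^ 2) * (1 - t) ^ h by ring, mul_smul,
      ← this]
    module
  pR h v := by
    change (y ^ (h + 1) - y ^ (h + 2)) • v.1.2 1 - t • (y ^ (h + 1) - y ^ (h + 2)) • v.1.2 0 =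
      (y ^ (h + 1) - y ^ (h + 2)) • (v.1.2 1 - t • v.1.2 0)
    module
  inj v hv := congrArg (fun φ : Ksub M (t - t ^ 2) => φ.1.1) hv
  pσ m := by
    change sig2 (t - t ^ 2) m 1 - t • sig2 (t - t ^ 2) m 0 = m
    simp [sig2]
  ex b hb := by
    obtain ⟨⟨b1, b2⟩, h1, h2⟩ := b
    refine ⟨b1, ?_⟩
    change b2 1 - t • b2 0 = 0 at hb
    apply Subtype.ext
    apply Prod.ext
    · rfl
    · funext h
      change (t ^ h * (t - t ^ 2)) • b1 = b2 h
      induction h with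
      | zero => rw [pow_zero, one_mul]; exact h1.symm
      | succ h ih =>
        have := K_geom t (b1, b2) ⟨h1, h2⟩ h
        simp only [hb, smul_zero, sub_eq_zero] at this
        rw [this, ← ih, smul_smul]; congr 1; ring
  pi a := by
    change (t ^ 1 * (t - t ^ 2)) • a - t • (t ^ 0 * (t - t ^ 2)) • a = 0
    rw [smul_smul, ← sub_smul]
    convert zero_smul A a using 2
    ring

/-- cocycles of degree zero -/
lemma Z0_V (y t : A) (f) : Zc (Vt M y t) 0 f ↔
    ∀ h : ℕ, (t ^ (h + 1) - t ^ (h + 2)) • (f []) = (y ^ (h + 1) - y ^ (h + 2)) • (f []) := by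
  constructor
  · intro hf h
    exact sub_eq_zero.1 (hf [h] rfl)
  · intro hf t' ht
    obtain ⟨h, rfl⟩ := List.length_eq_one_iff.1 ht
    exact sub_eq_zero.2 (hf h)

lemma Z0_K (y w : A) (g) (hg : Zc (KB M y w) 0 g) :
    ∃ p : M, (y - y ^ 2 - w) • p = 0 ∧ (g []).1 = cst y p := by
  have hZ : Zc (Ccoind M y) 0 (fun s => (g s).1) := iZ (ses1 y w) hg
  rw [Z0_C] at hZ
  refine ⟨(g []).1.1, ?_, hZ⟩
  have h1 := (g []).2.1
  rw [hZ] at h1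
  change (y ^ (0 + 1) - y ^ (0 + 2)) • (g []).1.1 = w • (g []).1.1 at h1
  rw [sub_smul, sub_eq_zero, ← h1]; congr 1; ring

lemma Z0_K' (y w : A) (p : M) (hp : (y - y ^ 2 - w) • p = 0) :
    ∃ g, Zc (KB M y w) 0 g ∧ ∀ s, (g s).1 = cst y p := by
  have hm : cst y p ∈ Ksub M w := by
    rw [sub_smul, sub_eq_zero] at hp
    refine ⟨?_, fun h => ?_⟩
    · change (y ^ (0 + 1) - y ^ (0 + 2)) • p = w • p
      rw [← hp]; congr 1; ring
    · change (y ^ (h + 2 + 1) - y ^ (h + 2 + 2)) • p = (y ^ (h + 1 + 1) - y ^ (h + 1 + 2)) • p -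
        w • (y ^ (h + 1) - y ^ (h + 2)) • p
      rw [smul_comm w, ← hp, smul_smul, ← sub_smul]; congr 1; ring
  refine ⟨fun _ => (⟨cst y p, hm⟩ : Ksub M w), ?_, fun _ => rfl⟩
  intro t ht
  apply (ses1 y w).inj
  rw [del_map (ses1 y w).i (ses1 y w).iL (ses1 y w).iR]
  exact (Z0_C (M := M) y (fun _ => cst y p)).2 rfl t ht

lemma ses2_cst (y t : A) (g : Ksub M (t - t ^ 2)) (p : M)
    (hg : g.1 = cst y p) :
    (ses2 y t).p g = ((y - t) * (y - y ^ 2)) • p := by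
  change g.1.2 1 - t • g.1.2 0 = _
  rw [hg]
  change (y ^ (1 + 1) - y ^ (1 + 2)) • p - t • (y ^ (0 + 1) - y ^ (0 + 2)) • p = _
  rw [smul_smul, ← sub_smul]; congr 1; ring

section main
variable (y z yi zi : A) (hy : y * yi = 1) (hz : z * zi = 1)
  (S1 : ∀ m : M, ∃ m', (y - z) • m' = m) (S2 : ∀ m : M, ∃ m', (1 - y - z) • m' = m)
  (S3 : ∀ m : M, (y - z) • m = 0 → ∃ m', (y - z) • m' = 0 ∧ (1 - y) • m' = m)
  (u : M) (hu1 : (1 - y) • u = 0) (hu2 : (1 - z) • u = 0)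
  (hu : ∀ n : M, (1 - y) • n = 0 → (1 - z) • n = 0 → ∃ c : ℤ, n = c • u)
  (hu0 : ∀ c : ℤ, c • u = 0 → c = 0)
include S1 S2

lemma S12 (m : M) : ∃ m', (y - y ^ 2 - (z - z ^ 2)) • m' = m := by
  obtain ⟨a, rfl⟩ := S1 m
  obtain ⟨b, rfl⟩ := S2 a
  exact ⟨b, by rw [smul_smul]; congr 1; ring⟩

lemma Kz_acyc (k : ℕ) : Acyc (KB M y (z - z ^ 2)) (k + 1) :=
  K_acyc y _ (S12 y z S1 S2) k

lemma Kz_acyc' (k : ℕ) : Acyc (KB M y ((1 - z) - (1 - z) ^ 2)) (k + 1) :=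
  K_acyc y _ (by
    rw [show (1 - z) - (1 - z) ^ 2 = z - z ^ 2 by ring]; exact S12 y z S1 S2) k

omit S1 S2 in
include hy hz in
lemma Z0z (f) (hf : Zc (Vt M y z) 0 f) : (y - z) • (f []) = 0 := by
  rw [Z0_V] at hf
  have h0 := sub_eq_zero.2 (hf 0)
  have h1 := sub_eq_zero.2 (hf 1)
  rw [← sub_smul] at h0 h1
  have : (y - z) = (yi * zi) * ((y + z) * (z ^ (0 + 1) - z ^ (0 + 2) - (y ^ (0 + 1) - y ^ (0 + 2)))
      - (z ^ (1 + 1) - z ^ (1 + 2) - (y ^ (1 + 1) - y ^ (1 + 2)))) := by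
    linear_combination (-(y - z) * (z * zi)) * hy - (y - z) * hz
  rw [this, mul_smul, sub_smul, mul_smul (y + z), h0, h1]; simp

omit S1 S2 in
include hy in
lemma Z0z' (f) (hf : Zc (Vt M y (1 - z)) 0 f) :
    (1 - y) • (1 - y - z) • (f []) = 0 ∧ (1 - z) • (1 - y - z) • (f []) = 0 := by
  rw [Z0_V] at hf
  have h0 := sub_eq_zero.2 (hf 0)
  have h1 := sub_eq_zero.2 (hf 1)
  rw [← sub_smul] at h0 h1
  set t := 1 - z with ht
  set D0 := (t ^ (0 + 1) - t ^ (0 + 2) - (y ^ (0 + 1) - y ^ (0 + 2))) with hD0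
  set D1 := (t ^ (1 + 1) - t ^ (1 + 2) - (y ^ (1 + 1) - y ^ (1 + 2))) with hD1
  have e1 : (1 - z) * (1 - y - z) = yi * (D1 - (y + t) * D0) := by
    rw [hD0, hD1, ht]
    linear_combination (-(1 - z) * (1 - y - z)) * hy
  have e2 : (1 - y) * (1 - y - z) = (1 - z) * (1 - y - z) + D0 := by
    rw [hD0, ht]; ring
  have a : (1 - z) • (1 - y - z) • (f []) = 0 := by
    rw [smul_smul, e1, mul_smul, sub_smul, mul_smul, h0, h1]; simp
  refine ⟨?_, a⟩
  rw [smul_smul, e2, add_smul, h0, ← smul_smul, a, add_zero]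

include hy hz hu1 hu2 hu hu0 in
lemma base_cyc : Cyc (Vt M y z) 1 := by
  refine cyc_step (ses2 y z) (Kz_acyc y z S1 S2 0) (fun _ => (-u : M)) ?_ ?_ ?_
  · rw [Z0_V]
    intro h
    change ((1 - z) ^ (h + 1) - (1 - z) ^ (h + 2)) • (-u) = (y ^ (h + 1) - y ^ (h + 2)) • (-u)
    rw [show (1 - z) ^ (h + 1) - (1 - z) ^ (h + 2) = ((1 - z) ^ h * z) * (1 - z) by ring,
      show y ^ (h + 1) - y ^ (h + 2) = y ^ (h + 1) * (1 - y) by ring, mul_smul, mul_smul (y ^ (h + 1)),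
      smul_neg (1 - z), smul_neg (1 - y), hu1, hu2]
    simp
  · intro f hf
    obtain ⟨h1, h2⟩ := Z0z' y z yi hy f hf
    obtain ⟨c, hc⟩ := hu _ h1 h2
    set m : M := f [] - c • (-u) with hm
    have hm0 : (1 - y - z) • m = 0 := by
      have e : (1 - y - z) • u = -u := by
        have : (1 - y - z) = (1 - y) + (1 - z) - 1 := by ring
        rw [this, sub_smul, add_smul, hu1, hu2]; simp
      rw [hm, smul_sub, hc, smul_comm, smul_neg, e]; simp
    obtain ⟨p0, hp0⟩ := S1 m
    have hpk : (y - y ^ 2 - (z - z ^ 2)) • ((yi * zi) • p0) = 0 := by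
      have : (y - y ^ 2 - (z - z ^ 2)) * (yi * zi) = (yi * zi) * ((1 - y - z) * (y - z)) := by ring
      rw [smul_smul, this, mul_smul _ ((1 - y - z) * (y - z)), mul_smul (1 - y - z), hp0, hm0, smul_zero]
    obtain ⟨g, hg, hg'⟩ := Z0_K' y (z - z ^ 2) _ hpk
    refine ⟨c, g, hg, fun _ => 0, fun t ht => ?_⟩
    obtain rfl := List.length_eq_zero_iff.1 ht
    have hc' := ses2_cst y z (g []) _ (hg' [])
    change m - (ses2 y z).p (g []) = 0
    rw [hc']
    change m - ((y - z) * (y - y ^ 2)) • ((yi * zi) • p0) = 0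
    have e : (y - z) * (y - y ^ 2) * (yi * zi) = (y - z) + (yi * zi * y) * (1 - y - z) * (y - z) := by
      linear_combination (y - z) * zi * z * hy + (y - z) * hz
    rw [smul_smul, e, add_smul, mul_smul, mul_smul, hp0, hm0, smul_zero, add_zero, sub_self]
  · rintro c g hg ⟨v, hv⟩
    have hv := hv [] rfl
    obtain ⟨p, hp, hgp⟩ := Z0_K y _ g hg
    simp only [del] at hv
    rw [ses2_cst y z (g []) p hgp] at hv
    apply hu0
    have e : (1 - y - z) • u = -u := by
      have : (1 - y - z) = (1 - y) + (1 - z) - 1 := by ring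
      rw [this, sub_smul, add_smul, hu1, hu2]; simp
    have e2 : c • u = (1 - y - z) • (c • (-u)) := by rw [smul_comm, smul_neg, e]; simp
    rw [e2, show c • (-u) = ((y - z) * (y - y ^ 2)) • p from sub_eq_zero.1 hv, smul_smul,
      show (1 - y - z) * ((y - z) * (y - y ^ 2)) = (y - y ^ 2) * (y - y ^ 2 - (z - z ^ 2)) by ring,
      mul_smul, hp, smul_zero]

include hy hz S3 in
lemma base_acyc : Acyc (Vt M y (1 - z)) 1 := by
  refine acyc_step (ses2 y (1 - z)) (Kz_acyc' y z S1 S2 0) ?_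
  intro f hf
  have hf' : (y - z) • (f []) = 0 := by
    rw [sub_sub_cancel] at hf
    exact Z0z y z yi zi hy hz f hf
  obtain ⟨f1, h1, h2⟩ := S3 _ hf'
  obtain ⟨p1, hp1⟩ := S2 (-f1)
  obtain ⟨g, hg, hg'⟩ := Z0_K' y ((1 - z) - (1 - z) ^ 2) (yi • p1) (by
    have : (y - y ^ 2 - ((1 - z) - (1 - z) ^ 2)) * yi = (yi * (y - z)) * (1 - y - z) := by ring
    rw [smul_smul, this, mul_smul, hp1, mul_smul, smul_neg, h1]; simp)
  refine ⟨g, hg, fun _ => 0, fun t ht => ?_⟩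
  obtain rfl := List.length_eq_zero_iff.1 ht
  have e : (y - (1 - z)) * (y - y ^ 2) * yi = - ((1 - y) * (1 - y - z)) := by
    linear_combination (- (1 - y) * (1 - y - z)) * hy
  simp only [ses2_cst y (1 - z) (g []) _ (hg' []), del]
  rw [smul_smul, e, neg_smul, mul_smul, hp1, smul_neg, h2]
  simp

include hy hz S3 hu1 hu2 hu hu0 in
lemma main_V (j : ℕ) : (Cyc (Vt M y z) (2 * j + 1) ∧ Acyc (Vt M y (1 - z)) (2 * j + 1)) ∧
    (Acyc (Vt M y z) (2 * j + 2)) := by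
  have key : ∀ j, (Cyc (Vt M y z) (2 * j + 1) ∧ Acyc (Vt M y (1 - z)) (2 * j + 1)) →
      (Cyc (Vt M y (1 - z)) (2 * j + 2) ∧ Acyc (Vt M y z) (2 * j + 2)) := by
    rintro j ⟨h1, h2⟩
    refine ⟨?_, acyc_step' (ses2 y z) (Kz_acyc y z S1 S2 _) h2⟩
    refine cyc_step' (ses2 y (1 - z)) (Kz_acyc' y z S1 S2 _) (Kz_acyc' y z S1 S2 _) ?_
    rw [sub_sub_cancel]; exact h1
  have key2 : ∀ j, (Cyc (Vt M y z) (2 * j + 1) ∧ Acyc (Vt M y (1 - z)) (2 * j + 1)) := by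
    intro j
    induction j with
    | zero => exact ⟨base_cyc y z yi zi hy hz S1 S2 u hu1 hu2 hu hu0,
        base_acyc y z yi zi hy hz S1 S2 S3⟩
    | succ j ih =>
      obtain ⟨h1, h2⟩ := key j ih
      refine ⟨cyc_step' (ses2 y z) (Kz_acyc y z S1 S2 _) (Kz_acyc y z S1 S2 _) h1, ?_⟩
      refine acyc_step' (ses2 y (1 - z)) (Kz_acyc' y z S1 S2 _) ?_
      rw [sub_sub_cancel]; exact h2
  exact ⟨key2 j, (key j (key2 j)).2⟩

end main
end concrete
end
end TF

namespace TF
noncomputable section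

lemma zrec {X : Type} (x0 : X) (R : ℤ → X → X → Prop) (h1 : ∀ k x, ∃ x', R k x x')
    (h2 : ∀ k x', ∃ x, R k x x') : ∃ h : ℤ → X, ∀ k, R k (h k) (h (k + 1)) := by
  choose up hup using h1
  choose dn hdn using h2
  let p : ℕ → X := fun n => Nat.rec x0 (fun n x => up n x) n
  let q : ℕ → X := fun n => Nat.rec (dn (-1) x0) (fun n x => dn (Int.negSucc (n + 1)) x) n
  refine ⟨fun k => Int.rec p q k, fun k => ?_⟩
  obtain n | n := k
  · exact hup n (p n)
  · cases n with
    | zero => exact hdn (-1) x0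
    | succ n =>
      have e' : Int.negSucc (n + 1) + 1 = Int.negSucc n := by omega
      rw [e']
      exact hdn (Int.negSucc (n + 1)) (q n)

lemma sumZ (g : ℤ → ℤ) : ∃ h : ℤ → ℤ, ∀ k, h (k + 1) - h k = g k :=
  zrec 0 (fun k x x' => x' - x = g k) (fun k x => ⟨g k + x, by ring⟩) (fun k x => ⟨x - g k, by ring⟩)

abbrev MM : Type := ℤ → ℤ → ℤ

def shEnd (p : ℤ × ℤ) : MM →ₗ[ℤ] MM where
  toFun m a b := m (a + p.1) (b + p.2)
  map_add' _ _ := rfl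
  map_smul' _ _ := rfl

def shHom : Multiplicative (ℤ × ℤ) →* Module.End ℤ MM where
  toFun p := shEnd p.toAdd
  map_one' := by
    ext m a b; simp [shEnd]
  map_mul' p q := by
    apply LinearMap.ext; intro m; funext a b
    simp only [shEnd, LinearMap.coe_mk, AddHom.coe_mk, toAdd_mul, Prod.fst_add, Prod.snd_add,
      Module.End.mul_apply, add_assoc]

abbrev AA : Type := MonoidAlgebra ℤ (Multiplicative (ℤ × ℤ))

def actHom : AA →ₐ[ℤ] Module.End ℤ MM := MonoidAlgebra.lift ℤ _ _ shHom

instance : Module AA MM := Module.compHom MM actHom.toRingHom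

lemma AA_smul (a : AA) (m : MM) : a • m = actHom a m := rfl

def mon (a b : ℤ) : AA := MonoidAlgebra.of ℤ _ (Multiplicative.ofAdd (a, b))

lemma mon_smul (p q : ℤ) (m : MM) (a b : ℤ) : (mon p q • m) a b = m (a + p) (b + q) := by
  rw [AA_smul, mon, actHom, MonoidAlgebra.lift_of]; rfl

lemma mon_mul (p q r s : ℤ) : mon p q * mon r s = mon (p + r) (q + s) := by
  simp only [mon, ← map_mul]; rfl

lemma mon_zero : mon 0 0 = 1 := map_one (MonoidAlgebra.of ℤ (Multiplicative (ℤ × ℤ)))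

lemma mon_pow (p q : ℤ) (n : ℕ) : mon p q ^ n = mon (n * p) (n * q) := by
  induction n with
  | zero => simp [mon_zero]
  | succ n ih => rw [pow_succ, ih, mon_mul]; push_cast; congr 1 <;> ring

abbrev yA : AA := mon 0 1
abbrev zA : AA := mon 1 0

lemma y_sm (m : MM) (a b : ℤ) : (yA • m) a b = m a (b + 1) := by rw [mon_smul, add_zero]
lemma z_sm (m : MM) (a b : ℤ) : (zA • m) a b = m (a + 1) b := by rw [mon_smul, add_zero]

lemma MS1 (m : MM) : ∃ m', (yA - zA) • m' = m := by
  have := fun s : ℤ => sumZ (fun b => m (s - b - 1) b)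
  choose h hh using this
  refine ⟨fun a b => h (a + b) b, ?_⟩
  funext a b
  have := hh (a + b + 1) b
  rw [sub_smul]
  change (yA • (_ : MM)) a b - (zA • (_ : MM)) a b = _
  rw [y_sm, z_sm]
  rw [show a + (b + 1) = a + b + 1 by ring, show a + 1 + b = a + b + 1 by ring, this]
  congr 1; ring

lemma MS2 (m : MM) : ∃ m', (1 - yA - zA) • m' = m := by
  obtain ⟨h, hh⟩ := zrec (X := ℤ → ℤ) 0
    (fun b r r' => ∀ a, r a - r' a - r (a + 1) = m a b)
    (fun b r => ⟨fun a => r a - r (a + 1) - m a b, fun a => by ring⟩)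
    (fun b r' => by
      obtain ⟨r, hr⟩ := sumZ (fun a => - r' a - m a b)
      exact ⟨r, fun a => by have := hr a; linarith⟩)
  refine ⟨fun a b => h b a, ?_⟩
  funext a b
  rw [sub_smul, sub_smul, one_smul]
  change _ - (yA • (_ : MM)) a b - (zA • (_ : MM)) a b = _
  rw [y_sm, z_sm]
  exact hh b a

lemma ker_yz (m : MM) (hm : (yA - zA) • m = 0) (a b : ℤ) : m a b = m 0 (a + b) := by
  have h : ∀ a b, m a (b + 1) = m (a + 1) b := by
    intro a b
    have := congrFun (congrFun hm a) b
    rw [sub_smul] at this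
    change (yA • (_ : MM)) a b - (zA • (_ : MM)) a b = 0 at this
    rw [y_sm, z_sm] at this
    exact sub_eq_zero.1 this
  induction a using Int.induction_on generalizing b with
  | zero => rw [zero_add]
  | succ i ih => rw [← h, ih]; congr 1; ring
  | pred i ih =>
    have := h (-i - 1) (b - 1)
    rw [sub_add_cancel, sub_add_cancel] at this
    rw [this, ih]; congr 1; ring

lemma ker_y (m : MM) (hm : (1 - yA) • m = 0) (a b : ℤ) : m a b = m a (b + 1) := by
  have := congrFun (congrFun hm a) b
  rw [sub_smul, one_smul] at this
  change _ - (yA • (_ : MM)) a b = 0 at this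
  rw [y_sm] at this
  exact sub_eq_zero.1 this

lemma ker_z (m : MM) (hm : (1 - zA) • m = 0) (a b : ℤ) : m a b = m (a + 1) b := by
  have := congrFun (congrFun hm a) b
  rw [sub_smul, one_smul] at this
  change _ - (zA • (_ : MM)) a b = 0 at this
  rw [z_sm] at this
  exact sub_eq_zero.1 this

lemma const_of (g : ℤ → ℤ) (hg : ∀ b, g b = g (b + 1)) (b : ℤ) : g b = g 0 := by
  induction b using Int.induction_on with
  | zero => rfl
  | succ i ih => rw [← hg, ih]
  | pred i ih => rw [← ih, hg (-i - 1), sub_add_cancel]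

lemma MS3 (m : MM) (hm : (yA - zA) • m = 0) : ∃ m', (yA - zA) • m' = 0 ∧ (1 - yA) • m' = m := by
  obtain ⟨h, hh⟩ := sumZ (fun s => - m 0 s)
  refine ⟨fun a b => h (a + b), ?_, ?_⟩
  · funext a b
    rw [sub_smul]
    change (yA • (_ : MM)) a b - (zA • (_ : MM)) a b = 0
    rw [y_sm, z_sm]
    rw [show a + (b + 1) = a + b + 1 by ring, show a + 1 + b = a + b + 1 by ring, sub_self]
  · funext a b
    rw [sub_smul, one_smul]
    change _ - (yA • (_ : MM)) a b = _
    rw [y_sm, ker_yz m hm a b]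
    have := hh (a + b)
    rw [← add_assoc]; linarith

def uM : MM := fun _ _ => 1

lemma Mhu1 : (1 - yA) • uM = 0 := by
  funext a b
  rw [sub_smul, one_smul]
  change _ - (yA • (_ : MM)) a b = 0
  rw [y_sm]; rfl

lemma Mhu2 : (1 - zA) • uM = 0 := by
  funext a b
  rw [sub_smul, one_smul]
  change _ - (zA • (_ : MM)) a b = 0
  rw [z_sm]; rfl

lemma Mhu (n : MM) (h1 : (1 - yA) • n = 0) (h2 : (1 - zA) • n = 0) : ∃ c : ℤ, n = c • uM := by
  refine ⟨n 0 0, ?_⟩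
  funext a b
  change n a b = n 0 0 * 1
  rw [mul_one, const_of (n a) (ker_y n h1 a) b, const_of (fun a => n a 0) (fun a => ker_z n h2 a 0) a]

lemma Mhu0 (c : ℤ) (h : c • uM = 0) : c = 0 := by
  have := congrFun (congrFun h 0) 0
  change c * 1 = 0 at this
  simpa using this

abbrev VV : BM MM := Vt MM yA zA

lemma yyi : yA * mon 0 (-1) = 1 := by rw [mon_mul, ← mon_zero]; rfl
lemma zzi : zA * mon (-1) 0 = 1 := by rw [mon_mul, ← mon_zero]; rfl

lemma VV_main (j : ℕ) : Cyc VV (2 * j + 1) ∧ Acyc VV (2 * j + 2) := by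
  have := main_V yA zA _ _ yyi zzi MS1 MS2 MS3 uM Mhu1 Mhu2 Mhu Mhu0 j
  exact ⟨this.1.1, this.2⟩

/-! ### bridge -/

def dl : (List ℤ → ℤ → ℤ) → List ℤ → ℤ → ℤ
  | _, [], _ => 0
  | f, a :: l, c => f l c - f (l.map (· - 1)) (c + 1) - dl (fun s => f (a :: s)) l c

def Lt : ℤ → List ℕ → List ℤ
  | _, [] => []
  | a, h :: t => (a + h + 2) :: Lt (a + h + 2) t

def ga : ℤ → List ℤ → List ℕ
  | _, [] => []
  | a, b :: l => (b - a - 2).toNat :: ga b l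

def la : ℤ → List ℤ → ℤ
  | a, [] => a
  | _, b :: l => la b l

def tp (a : ℤ) (t : List ℕ) : ℤ := la a (Lt a t)

lemma tp_cons (a : ℤ) (h : ℕ) (t) : tp a (h :: t) = tp (a + h + 2) t := rfl
lemma tp_nil (a : ℤ) : tp a [] = a := rfl

lemma Lt_map (a : ℤ) (t) : (Lt a t).map (· - 1) = Lt (a - 1) t := by
  induction t generalizing a with
  | nil => rfl
  | cons h t ih =>
    simp only [Lt, List.map_cons, ih, show a - 1 + h + 2 = a + h + 2 - 1 by ring]

lemma tp_sub (a : ℤ) (t) : tp (a - 1) t = tp a t - 1 := by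
  induction t generalizing a with
  | nil => rfl
  | cons h t ih =>
    rw [tp_cons, tp_cons, ← ih]; congr 1; ring

lemma Lt_len (a : ℤ) (t) : (Lt a t).length = t.length := by
  induction t generalizing a with
  | nil => rfl
  | cons h t ih => simp [Lt, ih]

lemma ga_len (a : ℤ) (l) : (ga a l).length = l.length := by
  induction l generalizing a with
  | nil => rfl
  | cons h t ih => simp [ga, ih]

lemma ga_Lt (a : ℤ) (t) : ga a (Lt a t) = t := by
  induction t generalizing a with
  | nil => rfl
  | cons h t ih =>
    simp only [Lt, ga, ih]; congr 1; omega

lemma Lt_ge (a : ℤ) (t) : ∀ b ∈ Lt a t, a + 2 ≤ b := by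
  induction t generalizing a with
  | nil => simp [Lt]
  | cons h t ih =>
    intro b hb
    simp only [Lt, List.mem_cons] at hb
    rcases hb with rfl | hb
    · omega
    · have := ih _ b hb; omega

lemma Lt_srt (a : ℤ) (t) : Srt (a :: Lt a t) := by
  induction t generalizing a with
  | nil => simp [Lt, Srt]
  | cons h t ih =>
    unfold Srt
    rw [List.pairwise_cons]
    exact ⟨Lt_ge a (h :: t), ih (a + h + 2)⟩

lemma Lt_ga (a : ℤ) (l) (h : Srt (a :: l)) : Lt a (ga a l) = l := by
  induction l generalizing a with
  | nil => rfl
  | cons b l ih =>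
    unfold Srt at h
    rw [List.pairwise_cons] at h
    have hb := h.1 b (by simp)
    simp only [ga, Lt]
    rw [show a + ((b - a - 2).toNat : ℤ) + 2 = b by omega, ih b h.2]

def toF (f : List ℤ → ℤ → ℤ) : List ℕ → MM := fun t a b => f (a :: Lt a t) (-b - tp a t)

def ofF (U : List ℕ → MM) : List ℤ → ℤ → ℤ
  | [], _ => 0
  | a :: l, c => U (ga a l) a (-c - la a l)

lemma toF_ofF (U) : toF (ofF U) = U := by
  funext t a b
  simp only [toF, ofF, ga_Lt]
  congr 1
  unfold tp; ring

lemma pow_sm_z (h : ℕ) (m : MM) (a b) : ((zA ^ (h + 1) - zA ^ (h + 2)) • m) a b =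
    m (a + h + 1) b - m (a + h + 2) b := by
  rw [sub_smul, mon_pow, mon_pow]
  change (_ • m) a b - (_ • m) a b = _
  rw [mon_smul, mon_smul]; push_cast
  congr 2 <;> ring

lemma pow_sm_y (h : ℕ) (m : MM) (a b) : ((yA ^ (h + 1) - yA ^ (h + 2)) • m) a b =
    m a (b + h + 1) - m a (b + h + 2) := by
  rw [sub_smul, mon_pow, mon_pow]
  change (_ • m) a b - (_ • m) a b = _
  rw [mon_smul, mon_smul]; push_cast
  congr 2 <;> ring

lemma bridge (t : List ℕ) : ∀ (φ : List ℤ → ℤ → ℤ) (p : ℤ) (f : List ℕ → MM) (a : ℤ)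
    (_ : ∀ b, f [] a b = φ [] (-b - p))
    (_ : ∀ (h : ℕ) t b, f (h :: t) a b = φ ((p + h + 2) :: Lt (p + h + 2) t) (-b - tp (p + h + 2) t))
    (h : ℕ) (b : ℤ), dl φ ((p + h + 2) :: Lt (p + h + 2) t) (-b - tp (p + h + 2) t) =
      - (rt VV t f h) a b := by
  induction t with
  | nil =>
    intro φ p f a h0 h1 h b
    change φ [] _ - φ [] _ - 0 = - ((yA ^ (h + 1) - yA ^ (h + 2)) • f []) a b
    rw [pow_sm_y, h0, h0, tp_nil, show -(b + h + 1) - p = -b - (p + h + 2) + 1 by ring,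
      show -(b + h + 2) - p = -b - (p + h + 2) by ring]
    ring
  | cons g t ih =>
    intro φ p f a h0 h1 h b
    have IH := ih (fun s => φ ((p + h + 2) :: s)) (p + h + 2) (fun s => f (h :: s)) a
      (fun b => by rw [h1]; rfl) (fun k t b => by rw [h1]; rfl) g b
    rw [tp_cons]
    change φ (_ :: _) _ - φ (List.map _ (_ :: Lt _ t)) _ - dl _ (_ :: Lt _ t) _ = - (f _ a b - f _ a b - _)
    rw [IH, h1, h1]
    rw [← Lt.eq_2, Lt_map]
    have e1 : p + ((h + g + 2 : ℕ) : ℤ) + 2 = p + h + 2 + g + 2 := by push_cast; ring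
    have e2 : p + ((h + g + 1 : ℕ) : ℤ) + 2 = p + h + 2 + g + 2 - 1 := by push_cast; ring
    rw [e1, e2, tp_sub, Lt.eq_2 (p + h + 2), Lt.eq_2 (p + h + 2 - 1), show p + h + 2 - 1 + g + 2 = p + h + 2 + g + 2 - 1 by ring,
      show ∀ q : ℤ, -b - (q - 1) = -b - q + 1 by intro q; ring]
    ring

lemma dl_del (f : List ℤ → ℤ → ℤ) (h : ℕ) (t : List ℕ) (a b : ℤ) :
    dl f (a :: Lt a (h :: t)) (-b - tp a (h :: t)) = - (del VV (toF f) (h :: t)) a b := by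
  have B := bridge t (fun s => f (a :: s)) a (toF f) a (fun b => rfl) (fun h t b => rfl) h b
  have e : dl f (a :: Lt a (h :: t)) (-b - tp a (h :: t)) =
    f (Lt a (h :: t)) (-b - tp a (h :: t)) -
    f ((Lt a (h :: t)).map (· - 1)) (-b - tp a (h :: t) + 1) -
    dl (fun s => f (a :: s)) ((a + h + 2) :: Lt (a + h + 2) t) (-b - tp (a + h + 2) t) := rfl
  rw [e, B]
  change _ = - (((zA ^ (h + 1) - zA ^ (h + 2)) • toF f t) a b - _)
  rw [pow_sm_z, Lt_map]
  simp only [toF, Lt]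
  rw [tp_cons, show a - 1 + h + 2 = a + h + 1 by ring,
    show a + h + 1 = a + h + 2 - 1 by ring, tp_sub,
    show ∀ q : ℤ, -b - (q - 1) = -b - q + 1 by intro q; ring]
  ring

def Zf (n : ℕ) (f : List ℤ → ℤ → ℤ) : Prop :=
  ∀ l, Srt l → l.length = n + 1 → ∀ c, dl f l c = 0

def Bf (n : ℕ) (f : List ℤ → ℤ → ℤ) : Prop :=
  ∃ u, ∀ l, Srt l → l.length = n → ∀ c, f l c = dl u l c

lemma Zf_iff (k : ℕ) (f) : Zf (k + 1) f ↔ Zc VV k (toF f) := by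
  constructor
  · intro hf t ht
    obtain _ | ⟨h, t⟩ := t
    · simp at ht
    funext a b
    have := hf (a :: Lt a (h :: t)) (Lt_srt _ _) (by simp [Lt_len, ht]) (-b - tp a (h :: t))
    rw [dl_del] at this
    exact neg_eq_zero.1 this
  · intro hf l hl hn c
    obtain _ | ⟨a, l⟩ := l
    · simp at hn
    have e := Lt_ga a l hl
    have hn' : (ga a l).length = k + 1 := by rw [ga_len]; simpa using hn
    generalize ga a l = t at e hn'
    subst e
    obtain _ | ⟨h, t⟩ := t
    · simp at hn'
    have := dl_del f h t a (-c - tp a (h :: t))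
    rw [hf _ hn'] at this
    rw [show -(-c - tp a (h :: t)) - tp a (h :: t) = c by ring] at this
    rw [this]; rfl

lemma Bf_iff (k : ℕ) (f) : Bf (k + 2) f ↔ Bd VV (k + 1) (toF f) := by
  constructor
  · rintro ⟨u, hu⟩
    refine ⟨fun s => (-1 : ℤ) • toF u s, fun t ht => ?_⟩
    rw [del_zsmul]
    obtain _ | ⟨h, t⟩ := t
    · simp at ht
    funext a b
    have := hu (a :: Lt a (h :: t)) (Lt_srt _ _) (by simp [Lt_len]; simpa using ht) (-b - tp a (h :: t))
    rw [dl_del] at this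
    change _ = -1 * _
    rw [neg_one_mul]
    exact this
  · rintro ⟨U, hU⟩
    refine ⟨ofF (fun s => (-1 : ℤ) • U s), fun l hl hn c => ?_⟩
    obtain _ | ⟨a, l⟩ := l
    · simp at hn
    have e := Lt_ga a l hl
    have hn' : (ga a l).length = k + 1 := by rw [ga_len]; simpa using hn
    generalize ga a l = t at e hn'
    subst e
    obtain _ | ⟨h, t⟩ := t
    · simp at hn'
    have := dl_del (ofF (fun s => (-1 : ℤ) • U s)) h t a (-c - tp a (h :: t))
    rw [toF_ofF, del_zsmul, ← hU _ hn'] at this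
    rw [show -(-c - tp a (h :: t)) - tp a (h :: t) = c by ring] at this
    rw [this]
    change _ = - (-1 * f _ (-(-c - tp a (h :: t)) - tp a (h :: t)))
    rw [show -(-c - tp a (h :: t)) - tp a (h :: t) = c by ring]
    ring

lemma odd_case (n : ℕ) (hn : Odd n) (f) (hf : Zf n f) : Bf n f := by
  obtain ⟨j, rfl⟩ := hn
  cases j with
  | succ j =>
    rw [show 2 * (j + 1) + 1 = (2 * j + 1) + 2 by ring] at hf ⊢
    rw [Bf_iff]
    exact (VV_main j).2 _ ((Zf_iff _ _).1 hf)
  | zero =>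
    have h1 := (Zf_iff _ _).1 hf
    have h2 := Z0z yA zA _ _ yyi zzi _ h1
    obtain ⟨m', h3, h4⟩ := MS3 _ h2
    refine ⟨fun _ c => - m' 0 (1 - c), fun l hl hn c => ?_⟩
    obtain ⟨a, rfl⟩ := List.length_eq_one_iff.1 hn
    have := congrFun (congrFun h4 a) (-c - a)
    rw [sub_smul, one_smul] at this
    change _ - (yA • (_ : MM)) a (-c - a) = f [a] (-(-c - a) - a) at this
    rw [y_sm, ker_yz _ h3, ker_yz _ h3 a] at this
    rw [show -(-c - a) - a = c by ring] at this
    rw [← this]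
    change _ = - m' 0 (1 - c) - - m' 0 (1 - (c + 1)) - 0
    rw [show a + (-c - a) = 1 - (c + 1) by ring, show a + (-c - a + 1) = 1 - c by ring]
    ring

lemma even_case (n : ℕ) (hn : Even n) : ∃ e, Zf n e ∧
    (∀ f, Zf n f → ∃ k : ℤ, Bf n (fun l c => f l c - k * e l c)) ∧
    (∀ k : ℤ, Bf n (fun l c => k * e l c) → k = 0) := by
  obtain ⟨j, rfl⟩ := hn
  cases j with
  | succ j =>
    rw [show (j + 1) + (j + 1) = 2 * j + 2 by ring]
    obtain ⟨E, h1, h2, h3⟩ := (VV_main j).1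
    have hE := toF_ofF E
    refine ⟨ofF E, ?_, fun f hf => ?_, fun k hk => h3 k ?_⟩
    · rw [Zf_iff, hE]; exact h1
    · obtain ⟨k, hk⟩ := h2 _ ((Zf_iff _ _).1 hf)
      refine ⟨k, ?_⟩
      rw [Bf_iff]
      convert hk using 1
      funext s
      rw [show E s = toF (ofF E) s by rw [hE]]
      rfl
    · rw [Bf_iff] at hk
      convert hk using 1
      funext s
      rw [show E s = toF (ofF E) s by rw [hE]]
      rfl
  | zero =>
    refine ⟨fun _ _ => 1, ?_, fun f hf => ⟨f [] 0, fun _ _ => 0, ?_⟩, ?_⟩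
    · intro l hl hn c
      obtain ⟨a, rfl⟩ := List.length_eq_one_iff.1 hn
      rfl
    · intro l hl hn c
      obtain rfl := List.length_eq_zero_iff.1 hn
      change f [] c - f [] 0 * 1 = 0
      rw [const_of (f []) (fun b => ?_) c, mul_one, sub_self]
      have := hf [0] (by simp [Srt]) rfl b
      change f [] b - f [] (b + 1) - 0 = 0 at this
      linarith
    · rintro k ⟨u, hu⟩
      have := hu [] (by simp [Srt]) rfl 0
      change k * 1 = 0 at this
      linarith

end
end TF

namespace TF
noncomputable section
open CategoryTheory

abbrev GG : Type := commutator ThompsonF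

def inc (g : GG) : K := ⟨g.1, ((mem_comm_iff g.1).1 g.2).1⟩

lemma inc_mul (g h : GG) : inc (g * h) = inc g * inc h := rfl
lemma inc_one : inc 1 = 1 := rfl
lemma deg_inc (g : GG) : deg (inc g).1 = 0 := by
  have := ((mem_comm_iff g.1).1 g.2).2
  change Multiplicative.toAdd (dg g.1) = 0
  rw [this]; rfl

lemma deg_inv (g : ThompsonF) : deg g⁻¹ = - deg g := by simp [deg]
lemma deg_zpow (g : ThompsonF) (c : ℤ) : deg (g ^ c) = c * deg g := by simp [deg]
lemma deg_yK (κ : K) (a : ℤ) : deg (yK a * κ).1 = deg κ.1 + 1 := by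
  change deg (y a * κ.1) = _
  rw [deg_mul, deg_y, add_comm]
lemma deg_yc (c : ℤ) : deg (yK 0 ^ c).1 = c := by
  change deg ((y 0) ^ c) = c
  rw [deg_zpow, deg_y, mul_one]

def gk (κ : K) : GG := ⟨κ.1⁻¹ * y 0 ^ deg κ.1, by
  rw [mem_comm_iff]
  refine ⟨K.mul_mem (K.inv_mem κ.2) (K.zpow_mem (y_mem 0) _), ?_⟩
  have : deg (κ.1⁻¹ * y 0 ^ deg κ.1) = 0 := by
    rw [deg_mul, deg_inv, deg_zpow, deg_y]; ring
  exact this⟩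

lemma gk_mul (κ : K) (g : GG) : gk (κ * (inc g)⁻¹) = g * gk κ := by
  apply Subtype.ext
  change (κ.1 * g.1⁻¹)⁻¹ * y 0 ^ deg (κ.1 * (inc g).1⁻¹) = g.1 * (κ.1⁻¹ * y 0 ^ deg κ.1)
  rw [deg_mul, deg_inv, deg_inc, neg_zero, add_zero]
  group

lemma deg_mul_inc (κ : K) (g : GG) : deg (κ * (inc g)⁻¹).1 = deg κ.1 := by
  change deg (κ.1 * (inc g).1⁻¹) = _
  rw [deg_mul, deg_inv, deg_inc, neg_zero, add_zero]

lemma gk_inc (κ : K) : yK 0 ^ deg κ.1 * (inc (gk κ))⁻¹ = κ := by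
  apply Subtype.ext
  change y 0 ^ deg κ.1 * (κ.1⁻¹ * y 0 ^ deg κ.1)⁻¹ = κ.1
  group

lemma gk_yc (c : ℤ) : gk (yK 0 ^ c) = 1 := by
  apply Subtype.ext
  change ((yK 0 ^ c).1)⁻¹ * y 0 ^ deg (yK 0 ^ c).1 = 1
  rw [deg_yc]
  change (y 0 ^ c)⁻¹ * y 0 ^ c = 1
  group

def repS (n : ℕ) : Representation ℤ GG (Sn n) where
  toFun g := (trL (inc g)⁻¹).restrict (fun _ hz => tr_mem _ hz)
  map_one' := by
    apply LinearMap.ext; intro z; apply Subtype.ext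
    change trL (inc 1)⁻¹ z.1 = z.1
    rw [inc_one, inv_one, tr_one]
  map_mul' g h := by
    apply LinearMap.ext; intro z; apply Subtype.ext
    change trL (inc (g * h))⁻¹ z.1 = trL (inc g)⁻¹ (trL (inc h)⁻¹ z.1)
    rw [tr_mul, inc_mul, mul_inv_rev]

abbrev PP (n : ℕ) : Rep ℤ GG := Rep.of (repS n)

abbrev TT : Rep ℤ GG := Rep.trivial ℤ GG ℤ

lemma repS_coe (n : ℕ) (g : GG) (z : Sn n) : ((repS n g z : Sn n) : CC) = trL (inc g)⁻¹ z.1 := rfl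

lemma cell_mem {n : ℕ} {l : List ℤ} (h : Srt l ∧ l.length = n) (κ : K) :
    Finsupp.single (l, κ) (1 : ℤ) ∈ Sn n := Finsupp.single_mem_supported _ _ h

open Classical in
def cell (n : ℕ) (l : List ℤ) (c : ℤ) : Sn n :=
  if h : Srt l ∧ l.length = n then ⟨Finsupp.single (l, yK 0 ^ c) 1, cell_mem h _⟩ else 0

lemma cell_coe {n : ℕ} {l : List ℤ} (h : Srt l ∧ l.length = n) (c : ℤ) :
    ((cell n l c : Sn n) : CC) = Finsupp.single (l, yK 0 ^ c) 1 := by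
  rw [cell, dif_pos h]

lemma PP_ext {n : ℕ} {E : Rep ℤ GG} (φ ψ : PP n ⟶ E)
    (h : ∀ l c, Srt l → l.length = n → φ.hom (cell n l c) = ψ.hom (cell n l c)) : φ = ψ := by
  apply Rep.hom_ext
  refine DFunLike.ext _ _ ?_
  rintro ⟨z, hz⟩
  change φ.hom (⟨z, hz⟩ : Sn n) = ψ.hom (⟨z, hz⟩ : Sn n)
  have : ∃ hz : z ∈ Sn n, φ.hom (⟨z, hz⟩ : Sn n) = ψ.hom (⟨z, hz⟩ : Sn n) := by
    refine supp_ind (Q := fun z => ∃ hz : z ∈ Sn n, φ.hom (⟨z, hz⟩ : Sn n) = ψ.hom (⟨z, hz⟩ : Sn n))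
      ?_ ?_ ?_ ?_ hz
    · exact ⟨zero_mem _, (map_zero φ.hom).trans (map_zero ψ.hom).symm⟩
    · rintro u v ⟨h1, h2⟩ ⟨h3, h4⟩
      refine ⟨add_mem h1 h3, ?_⟩
      have e1 := map_add φ.hom (⟨u, h1⟩ : Sn n) ⟨v, h3⟩
      have e2 := map_add ψ.hom (⟨u, h1⟩ : Sn n) ⟨v, h3⟩
      rw [h2, h4, ← e2] at e1
      exact e1
    · rintro k u ⟨h1, h2⟩
      refine ⟨Submodule.smul_mem _ _ h1, ?_⟩
      have e1 := map_zsmul φ.hom k (⟨u, h1⟩ : Sn n)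
      have e2 := map_zsmul ψ.hom k (⟨u, h1⟩ : Sn n)
      rw [h2, ← e2] at e1
      exact e1
    · rintro ⟨l, κ⟩ hl
      refine ⟨cell_mem hl κ, ?_⟩
      have e : (⟨Finsupp.single (l, κ) 1, cell_mem hl κ⟩ : Sn n) = repS n (gk κ) (cell n l (deg κ.1)) := by
        apply Subtype.ext
        rw [repS_coe, cell_coe hl, trL_single]
        simp only [trF, gk_inc]
      rw [e]
      have e1 := Rep.hom_comm_apply φ (gk κ) (cell n l (deg κ.1))
      have e2 := Rep.hom_comm_apply ψ (gk κ) (cell n l (deg κ.1))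
      rw [h l _ hl.1 hl.2, ← e2] at e1
      exact e1
  exact this.2

section lcs
variable {V : Type} [AddCommGroup V] [Module ℤ V] (ρ : Representation ℤ GG V)

def lc (val : List ℤ → ℤ → V) : CC →ₗ[ℤ] V :=
  Finsupp.linearCombination ℤ (fun c : Cell => ρ (gk c.2) (val c.1 (deg c.2.1)))

lemma lc_single (val : List ℤ → ℤ → V) (l κ) :
    lc ρ val (Finsupp.single (l, κ) 1) = ρ (gk κ) (val l (deg κ.1)) := by
  exact (Finsupp.linearCombination_single ℤ _ _).trans (@one_smul ℤ V _ (_) _)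

lemma lc_tr (val : List ℤ → ℤ → V) (g : GG) (z : CC) :
    lc ρ val (trL (inc g)⁻¹ z) = ρ g (lc ρ val z) := by
  have : lc ρ val ∘ₗ trL (inc g)⁻¹ = ρ g ∘ₗ lc ρ val := by
    ext ⟨l, κ⟩
    simp only [LinearMap.comp_apply, Finsupp.lsingle_apply, trL_single]
    rw [trF, lc_single, lc_single, gk_mul, deg_mul_inc, map_mul]
    rfl
  exact LinearMap.congr_fun this z

def homOfI (n : ℕ) (val : List ℤ → ℤ → V) : Representation.IntertwiningMap (repS n) ρ :=
  LinearMap.intertwiningMap_of_isIntertwiningMap (repS n) ρ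
    (lc ρ val ∘ₗ (Sn n).subtype) (fun g z => lc_tr ρ val g z.1)

end lcs

def homOf (n : ℕ) (E : Rep ℤ GG) (val : List ℤ → ℤ → E) : PP n ⟶ E :=
  @Rep.ofHom _ _ _ _ _ _ _ E.hV1 _ E.hV2 _ _ (@homOfI E.V E.hV1 E.hV2 E.ρ n val)

lemma homOf_apply (n : ℕ) (E : Rep ℤ GG) (val : List ℤ → ℤ → E) (z : Sn n) :
    (homOf n E val).hom z = @lc E.V E.hV1 E.hV2 E.ρ val z.1 := rfl

lemma homOf_cell (n : ℕ) (E : Rep ℤ GG) (val : List ℤ → ℤ → E) (l c) (h : Srt l ∧ l.length = n) :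
    (homOf n E val).hom (cell n l c) = val l c := by
  rw [homOf_apply, cell_coe h, @lc_single E.V E.hV1 E.hV2, gk_yc, deg_yc, map_one]; rfl

instance (n : ℕ) : Projective (PP n) where
  factors {E X} f e _ := by
    have hs := (Rep.epi_iff_surjective e).1 inferInstance
    choose s hs using hs
    refine ⟨homOf n E (fun l c => s (f.hom (cell n l c))), ?_⟩
    apply PP_ext
    intro l c h1 h2
    change e.hom ((homOf n E _).hom (cell n l c)) = _
    rw [homOf_cell n E _ l c ⟨h1, h2⟩, hs]

def dP (n : ℕ) : PP (n + 1) ⟶ PP n :=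
  Rep.ofHom (LinearMap.intertwiningMap_of_isIntertwiningMap (repS (n + 1)) (repS n)
    (dL.restrict (fun _ hz => d_mem hz)) (fun g z => Subtype.ext (tr_d _ z.1).symm))

lemma dP_coe (n : ℕ) (z : Sn (n + 1)) : (((dP n).hom z : Sn n) : CC) = dL z.1 := rfl

lemma dP_dP (n : ℕ) : dP (n + 1) ≫ dP n = 0 := by
  apply Rep.hom_ext
  apply Representation.IntertwiningMap.ext
  apply LinearMap.ext
  intro z
  apply Subtype.ext
  exact dd z.2

def aug : PP 0 ⟶ TT :=
  Rep.ofHom (LinearMap.intertwiningMap_of_isIntertwiningMap (repS 0) (Representation.trivial ℤ GG ℤ)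
    (augL ∘ₗ (Sn 0).subtype) (fun _ z => aug_tr _ z.1))

lemma dP_aug : dP 0 ≫ aug = 0 := by
  apply Rep.hom_ext
  apply Representation.IntertwiningMap.ext
  apply LinearMap.ext
  intro z
  exact aug_d z.2

abbrev PC : ChainComplex (Rep ℤ GG) ℕ := ChainComplex.of PP dP dP_dP

lemma PC_d (n : ℕ) : PC.d (n + 1) n = dP n := ChainComplex.of_d ..

/-! ### pairing -/

abbrev toHom (n : ℕ) (f : List ℤ → ℤ → ℤ) : PP n ⟶ TT := homOf n TT f

def fromHom {n : ℕ} (φ : PP n ⟶ TT) : List ℤ → ℤ → ℤ := fun l c => φ.hom (cell n l c)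

lemma to_from {n : ℕ} (φ : PP n ⟶ TT) : toHom n (fromHom φ) = φ := by
  apply PP_ext
  intro l c h1 h2
  exact homOf_cell n TT _ l c ⟨h1, h2⟩

lemma lcT_single (f : List ℤ → ℤ → ℤ) (l κ) :
    lc TT.ρ f (Finsupp.single (l, κ) 1) = f l (deg κ.1) := lc_single TT.ρ f l κ

lemma lcT_cons (f : List ℤ → ℤ → ℤ) (a : ℤ) (z : CC) :
    lc TT.ρ f (consL a z) = lc TT.ρ (fun s => f (a :: s)) z := by
  have : lc TT.ρ f ∘ₗ consL a = lc TT.ρ (fun s => f (a :: s)) := by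
    ext ⟨l, κ⟩
    simp only [LinearMap.comp_apply, Finsupp.lsingle_apply, consL_single]
    rw [consF, lcT_single, lcT_single]
  exact LinearMap.congr_fun this z

lemma lcT_d (l : List ℤ) : ∀ (f : List ℤ → ℤ → ℤ) (κ : K),
    lc TT.ρ f (dcell l κ) = dl f l (deg κ.1) := by
  induction l with
  | nil => intro f κ; exact map_zero _
  | cons a l ih =>
    intro f κ
    simp only [dcell, map_sub]
    rw [lcT_cons, ih, lcT_single, lcT_single, deg_yK]
    rfl

lemma d_toHom (n : ℕ) (f : List ℤ → ℤ → ℤ) (l c) (h : Srt l ∧ l.length = n + 1) :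
    (dP n ≫ toHom n f).hom (cell (n + 1) l c) = dl f l c := by
  change lc TT.ρ f (dL (cell (n + 1) l c).1) = _
  rw [cell_coe h, dL_single, one_smul, lcT_d, deg_yc]

end
end TF

namespace TF
noncomputable section
open CategoryTheory

def piP : PC ⟶ (ChainComplex.single₀ (Rep ℤ GG)).obj TT :=
  (PC.toSingle₀Equiv TT).symm ⟨aug, by rw [PC_d]; exact dP_aug⟩

lemma piP_f : piP.f 0 = aug := by
  have := congrArg Subtype.val ((PC.toSingle₀Equiv TT).apply_symm_apply ⟨aug, by rw [PC_d]; exact dP_aug⟩)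
  exact this

lemma ex_of {R H : Type} [CommRing R] [Group H] {A B C : Rep.{0} R H} (f : A ⟶ B) (g : B ⟶ C) (w : f ≫ g = 0)
    (h : ∀ x : B, g.hom x = 0 → ∃ y : A, f.hom y = x) : (ShortComplex.mk f g w).Exact := by
  apply (forget₂ (Rep.{0} R H) (ModuleCat.{0} R)).reflects_exact_of_faithful
  rw [ShortComplex.moduleCat_exact_iff]
  exact h

lemma ex_succ (m : ℕ) (f : PP (m + 2) ⟶ PP (m + 1)) (g : PP (m + 1) ⟶ PP m) (hf : f = dP (m + 1))
    (hg : g = dP m) (w : f ≫ g = 0) : (ShortComplex.mk f g w).Exact := by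
  subst hf hg
  apply ex_of
  intro z hz
  obtain ⟨u, hu, e⟩ := exact_pos (n := m) (z := z.1) z.2 (congrArg Subtype.val hz)
  exact ⟨⟨u, hu⟩, Subtype.ext e⟩

lemma ex_zero (f : PP 1 ⟶ PP 0) (g : PP 0 ⟶ TT) (hf : f = dP 0)
    (hg : g = aug) (w : f ≫ g = 0) : (ShortComplex.mk f g w).Exact := by
  subst hf hg
  apply ex_of
  intro z hz
  obtain ⟨u, hu, e⟩ := exact_zero (z := z.1) z.2 hz
  exact ⟨⟨u, hu⟩, Subtype.ext e⟩

lemma aug_surj : Epi aug := by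
  rw [Rep.epi_iff_surjective]
  intro x
  refine ⟨(x : ℤ) • cell 0 [] 0, ?_⟩
  have h1 : aug.hom (cell 0 [] 0) = (1 : ℤ) := by
    change augL (cell 0 [] 0).1 = 1
    have hh : Srt ([] : List ℤ) ∧ ([] : List ℤ).length = 0 := ⟨by simp [Srt], rfl⟩
    rw [cell_coe hh, augL_single]
  have := map_zsmul aug.hom x (cell 0 [] 0)
  refine this.trans ?_
  rw [h1]
  exact (zsmul_eq_mul _ _).trans (by simp)

instance quasi : QuasiIso piP where
  quasiIsoAt m := by
    cases m with
    | zero =>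
      rw [ChainComplex.quasiIsoAt₀_iff, ShortComplex.quasiIso_iff_of_zeros' _ rfl rfl rfl]
      constructor
      · exact ex_zero _ _ (PC_d 0) piP_f _
      · have : Epi (piP.f 0) := by rw [piP_f]; exact aug_surj
        exact this
    | succ m =>
      rw [quasiIsoAt_iff_exactAt' (hL := ChainComplex.exactAt_succ_single_obj ..),
          HomologicalComplex.exactAt_iff' _ (m + 2) (m + 1) m (by simp) (by simp)]
      exact ex_succ m _ _ (PC_d (m + 1)) (PC_d m) _

def PR : ProjectiveResolution TT where
  complex := PC
  projective n := inferInstanceAs (Projective (PP n))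
  π := piP
  quasiIso := quasi

lemma abs_even {R : Type} [CommRing R] (S : ShortComplex (ModuleCat.{0} R)) (e : S.X₂) (he : S.g e = 0)
    (h1 : ∀ x, S.g x = 0 → ∃ (k : R) (w : S.X₁), x = k • e + S.f w)
    (h2 : ∀ (k : R) (w : S.X₁), k • e = S.f w → k = 0) :
    Nonempty (S.homology ≃ₗ[R] R) := by
  let q : R →ₗ[R] (LinearMap.ker S.g.hom ⧸ LinearMap.range S.moduleCatToCycles) :=
    (LinearMap.range S.moduleCatToCycles).mkQ ∘ₗ LinearMap.toSpanSingleton R _ ⟨e, he⟩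
  have hq : Function.Bijective q := by
    constructor
    · rw [← LinearMap.ker_eq_bot, LinearMap.ker_eq_bot']
      intro k hk
      have hk' : k • (⟨e, he⟩ : LinearMap.ker S.g.hom) ∈ LinearMap.range S.moduleCatToCycles :=
        (Submodule.Quotient.mk_eq_zero _).1 hk
      obtain ⟨w, hw⟩ := hk'
      exact h2 k w (congrArg Subtype.val hw).symm
    · intro x
      obtain ⟨⟨x, hx⟩, rfl⟩ := Submodule.Quotient.mk_surjective _ x
      obtain ⟨k, w, h⟩ := h1 x hx
      refine ⟨k, ?_⟩
      refine (Submodule.Quotient.eq _).2 ?_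
      refine ⟨-w, Subtype.ext ?_⟩
      change S.f.hom (-w) = k • e - x
      rw [h, map_neg]
      change - S.f w = _
      abel
  exact ⟨S.moduleCatHomologyIso.toLinearEquiv ≪≫ₗ (LinearEquiv.ofBijective q hq).symm⟩

lemma abs_odd (S : ShortComplex (ModuleCat.{0} ℤ))
    (h1 : ∀ x, S.g x = 0 → ∃ (w : S.X₁), S.f w = x) : Subsingleton S.homology := by
  have : S.Exact := (ShortComplex.moduleCat_exact_iff S).2 h1
  exact ModuleCat.subsingleton_of_isZero ((ShortComplex.exact_iff_isZero_homology S).1 this)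

abbrev LY := PR.complex.linearYonedaObj ℤ TT

lemma LY_d (i j : ℕ) (φ : PP i ⟶ TT) : (LY.d i j).hom φ = (PC.d j i ≫ φ : PP j ⟶ TT) := rfl

lemma LY_iso (n : ℕ) : LY.homology n = (LY.sc n).homology := rfl

lemma cocyc (n : ℕ) (φ : PP n ⟶ TT) : dP n ≫ φ = 0 ↔ Zf n (fromHom φ) := by
  constructor
  · intro h l h1 h2 c
    rw [← d_toHom n _ l c ⟨h1, h2⟩, to_from, h]; rfl
  · intro h
    apply PP_ext
    intro l c h1 h2
    rw [← to_from φ, d_toHom n _ l c ⟨h1, h2⟩, h l h1 h2]; rfl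

lemma g_zero (n : ℕ) (φ : PP n ⟶ TT) : (LY.sc n).g φ = 0 ↔ Zf n (fromHom φ) := by
  rw [← cocyc]
  have : (ComplexShape.up ℕ).next n = n + 1 := by simp
  change (PC.d ((ComplexShape.up ℕ).next n) n ≫ φ) = 0 ↔ _
  rw [this, PC_d]

lemma f_im (n : ℕ) (φ : PP n ⟶ TT) : (∃ w, (LY.sc n).f w = φ) ↔ Bf n (fromHom φ) := by
  cases n with
  | zero =>
    have key : ∀ j, PC.d 0 j = 0 := fun j => PC.shape _ _ (by simp)
    constructor
    · rintro ⟨w, hw⟩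
      change (PC.d 0 ((ComplexShape.up ℕ).prev 0) ≫ w) = φ at hw
      have h0 : φ = 0 := by
        rw [← hw, key]
        exact Limits.zero_comp
      subst h0
      refine ⟨0, ?_⟩
      intro l h1 h2 c
      obtain rfl := List.length_eq_zero_iff.1 h2
      rfl
    · rintro ⟨u, hu⟩
      refine ⟨0, (map_zero _).trans ?_⟩
      apply PP_ext
      intro l c h1 h2
      refine Eq.symm ?_
      refine (hu l h1 h2 c).trans ?_
      obtain rfl := List.length_eq_zero_iff.1 h2
      rfl
  | succ m =>
    have key : (∃ w, (LY.sc (m+1)).f w = φ) ↔ ∃ w : PP m ⟶ TT, dP m ≫ w = φ := by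
      have : (ComplexShape.up ℕ).prev (m+1) = m := by simp
      change (∃ w : PP ((ComplexShape.up ℕ).prev (m+1)) ⟶ TT,
        PC.d (m+1) ((ComplexShape.up ℕ).prev (m+1)) ≫ w = φ) ↔ _
      rw [this, PC_d]
    rw [key]
    constructor
    · rintro ⟨w, rfl⟩
      refine ⟨fromHom w, ?_⟩
      intro l h1 h2 c
      rw [← d_toHom m _ l c ⟨h1, h2⟩, to_from]; rfl
    · rintro ⟨u, hu⟩
      refine ⟨toHom m u, ?_⟩
      apply PP_ext
      intro l c h1 h2
      rw [d_toHom m _ l c ⟨h1, h2⟩]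
      exact (hu l h1 h2 c).symm

lemma from_to (n : ℕ) (f : List ℤ → ℤ → ℤ) (l c) (h1 : Srt l) (h2 : l.length = n) :
    fromHom (toHom n f) l c = f l c := homOf_cell n TT f l c ⟨h1, h2⟩

lemma Bf_congr {n : ℕ} {f g : List ℤ → ℤ → ℤ} (h : ∀ l, Srt l → l.length = n → ∀ c, f l c = g l c)
    (hf : Bf n f) : Bf n g := by
  obtain ⟨u, hu⟩ := hf
  exact ⟨u, fun l h1 h2 c => by rw [← h l h1 h2 c, hu l h1 h2 c]⟩

lemma Zf_to {n : ℕ} {f : List ℤ → ℤ → ℤ} (hf : Zf n f) : Zf n (fromHom (toHom n f)) := by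
  rw [← cocyc]
  apply PP_ext
  intro l c h1 h2
  rw [d_toHom n _ l c ⟨h1, h2⟩, hf l h1 h2]; rfl

lemma main (n : ℕ) :
    (Even n → Nonempty ((groupCohomology TT n) ≃ₗ[ℤ] ℤ)) ∧
    (Odd n → Subsingleton (groupCohomology TT n)) := by
  have I := groupCohomologyIso TT n PR
  constructor
  · intro hn
    obtain ⟨e, he, h1, h2⟩ := even_case n hn
    obtain ⟨E⟩ : Nonempty ((LY.sc n).homology ≃ₗ[ℤ] ℤ) := by
      refine abs_even (LY.sc n) (toHom n e) ((g_zero n _).2 (Zf_to he)) ?_ ?_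
      · intro (x : PP n ⟶ TT) hx
        obtain ⟨k, hk⟩ := h1 _ ((g_zero n x).1 hx)
        have : Bf n (fromHom (x - k • toHom n e)) := by
          refine Bf_congr ?_ hk
          intro l a1 a2 c
          rw [← from_to n e l c a1 a2]
          rfl
        obtain ⟨w, hw⟩ := (f_im n _).2 this
        refine ⟨k, w, ?_⟩
        rw [hw]
        change x = k • toHom n e + (x - k • toHom n e)
        abel
      · intro k w hw
        apply h2 k
        have := (f_im n (k • toHom n e)).1 ⟨w, hw.symm⟩
        refine Bf_congr ?_ this
        intro l a1 a2 c
        rw [← from_to n e l c a1 a2]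
        rfl
    exact ⟨I.toLinearEquiv ≪≫ₗ E⟩
  · intro hn
    have : Subsingleton (LY.sc n).homology := by
      apply abs_odd
      intro x hx
      exact (f_im n x).2 (odd_case n hn _ ((g_zero n x).1 hx))
    have h' : Subsingleton (LY.homology n) := this
    exact @Equiv.subsingleton _ _ I.toLinearEquiv.toEquiv h'

end
end TF


/-- The integral group cohomology of the commutator subgroup `F′` of Thompson's group `F`
is infinite cyclic in every even degree and trivial in every odd degree. -/
theorem thompsonF_commutator_cohomology (n : ℕ) :
    (Even n →
      Nonempty ((groupCohomology (Rep.trivial ℤ (commutator ThompsonF) ℤ) n) ≃ₗ[ℤ] ℤ)) ∧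
    (Odd n → Subsingleton (groupCohomology (Rep.trivial ℤ (commutator ThompsonF) ℤ) n)) := by
  exact TF.main n
end

section
/- Let R = FreeAlgebra ℤ (Fin 2) be the ring of noncommuting polynomials over ℤ in two variables v, e (the images of the two generators), and set w := v·v − v and z := v·e − e·v. Then: (i) the ℤ-algebra homomorphism FreeAlgebra ℤ (Fin 3) → R sending the three generators to e, w, z respectively is injective (so the subring S generated by e, w, z is itself free on these three elements); and (ii) R decomposes as an internal direct sum of ℤ-modules R = S ⊕ S·v, where S is the range of this homomorphism and S·v = { s·v : s ∈ S }: every element of R is uniquely of the form s + s'·v with s, s' ∈ S. -/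
noncomputable section

/-- `v`, the degree-0 generator of `R = FreeAlgebra ℤ (Fin 2)`. -/
def v : FreeAlgebra ℤ (Fin 2) := FreeAlgebra.ι ℤ 0

/-- `e`, the degree-1 generator of `R = FreeAlgebra ℤ (Fin 2)`. -/
def e : FreeAlgebra ℤ (Fin 2) := FreeAlgebra.ι ℤ 1

/-- `w = v·v − v`. -/
def w : FreeAlgebra ℤ (Fin 2) := v * v - v

/-- `z = [v,e] = v·e − e·v`. -/
def z : FreeAlgebra ℤ (Fin 2) := v * e - e * v

/-- The ℤ-algebra homomorphism from the free algebra on three generators sending the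
generators to `e`, `w`, `z` respectively; its range is the subring `S`. -/
def toEWZ : FreeAlgebra ℤ (Fin 3) →ₐ[ℤ] FreeAlgebra ℤ (Fin 2) :=
  FreeAlgebra.lift ℤ ![e, w, z]

open Matrix in
def rho : FreeAlgebra ℤ (Fin 2) →ₐ[ℤ] Matrix (Fin 2) (Fin 2) (FreeAlgebra ℤ (Fin 3)) :=
  FreeAlgebra.lift ℤ ![!![0, 1; FreeAlgebra.ι ℤ 1, 1],
    !![FreeAlgebra.ι ℤ 0, 0; FreeAlgebra.ι ℤ 2, FreeAlgebra.ι ℤ 0]]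

open Matrix in
theorem rho_v : rho v = !![0, 1; FreeAlgebra.ι ℤ 1, 1] := by simp [rho, v]

open Matrix in
theorem rho_e : rho e =
    !![FreeAlgebra.ι ℤ 0, 0; FreeAlgebra.ι ℤ 2, FreeAlgebra.ι ℤ 0] := by simp [rho, e]

theorem rho_row (f : FreeAlgebra ℤ (Fin 3)) :
    rho (toEWZ f) 0 0 = f ∧ rho (toEWZ f) 0 1 = 0 := by
  induction f using FreeAlgebra.induction with
  | grade0 r =>
    rw [AlgHom.commutes, AlgHom.commutes]
    simp [Matrix.algebraMap_matrix_apply]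
  | grade1 i =>
    fin_cases i <;>
      simp [toEWZ, w, z, rho_v, rho_e, map_sub, map_mul, Matrix.mul_apply, Fin.sum_univ_two]
  | mul a b ha hb =>
    simp [map_mul, Matrix.mul_apply, Fin.sum_univ_two, ha.1, ha.2, hb.1, hb.2]
  | add a b ha hb => simp [map_add, ha.1, ha.2, hb.1, hb.2]

theorem rho_sv (f g : FreeAlgebra ℤ (Fin 3)) :
    rho (toEWZ f + toEWZ g * v) 0 0 = f ∧ rho (toEWZ f + toEWZ g * v) 0 1 = g := by
  simp [map_add, map_mul, Matrix.mul_apply, Fin.sum_univ_two, rho_row, rho_v]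

theorem toEWZ_e : toEWZ (FreeAlgebra.ι ℤ 0) = e := by simp [toEWZ]
theorem toEWZ_w : toEWZ (FreeAlgebra.ι ℤ 1) = w := by simp [toEWZ]
theorem toEWZ_z : toEWZ (FreeAlgebra.ι ℤ 2) = z := by simp [toEWZ]

theorem exists_sv (r : FreeAlgebra ℤ (Fin 2)) : ∀ f g : FreeAlgebra ℤ (Fin 3),
    ∃ f' g', (toEWZ f + toEWZ g * v) * r = toEWZ f' + toEWZ g' * v := by
  induction r using FreeAlgebra.induction with
  | grade0 r =>
    intro f g
    refine ⟨algebraMap ℤ _ r * f, algebraMap ℤ _ r * g, ?_⟩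
    rw [← Algebra.commutes, map_mul, map_mul, AlgHom.commutes, mul_add, mul_assoc]
  | grade1 i =>
    intro f g
    fin_cases i
    · refine ⟨g * FreeAlgebra.ι ℤ 1, f + g, ?_⟩
      rw [map_mul, map_add, toEWZ_w]
      change _ * v = _
      simp only [w]
      noncomm_ring
    · refine ⟨f * FreeAlgebra.ι ℤ 0 + g * FreeAlgebra.ι ℤ 2, g * FreeAlgebra.ι ℤ 0, ?_⟩
      rw [map_add, map_mul, map_mul, map_mul, toEWZ_e, toEWZ_z]
      change _ * e = _
      simp only [z]
      noncomm_ring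
  | mul a b ha hb =>
    intro f g
    obtain ⟨f1, g1, h1⟩ := ha f g
    obtain ⟨f2, g2, h2⟩ := hb f1 g1
    exact ⟨f2, g2, by rw [← mul_assoc, h1, h2]⟩
  | add a b ha hb =>
    intro f g
    obtain ⟨f1, g1, h1⟩ := ha f g
    obtain ⟨f2, g2, h2⟩ := hb f g
    refine ⟨f1 + f2, g1 + g2, ?_⟩
    rw [mul_add, h1, h2, map_add, map_add, add_mul]
    abel

/-- The subring `S` of `R` generated by `e`, `w = v² − v` and `z = ve − ev` is free on these
three elements, and `R` decomposes as the internal direct sum `R = S ⊕ S·v`: every element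
of `R` is uniquely of the form `s + s'·v` with `s, s' ∈ S`. -/
theorem freeAlgebra_S_Sv_decomposition :
    Function.Injective toEWZ ∧
    (∀ r : FreeAlgebra ℤ (Fin 2), ∃ s s' : FreeAlgebra ℤ (Fin 2),
      s ∈ toEWZ.range ∧ s' ∈ toEWZ.range ∧ r = s + s' * v) ∧
    (∀ s s' : FreeAlgebra ℤ (Fin 2), s ∈ toEWZ.range → s' ∈ toEWZ.range →
      s + s' * v = 0 → s = 0 ∧ s' = 0) := by
  refine ⟨fun f g h => ?_, fun r => ?_, ?_⟩
  · rw [← (rho_row f).1, h, (rho_row g).1]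
  · obtain ⟨f, g, h⟩ := exists_sv r 1 0
    exact ⟨toEWZ f, toEWZ g, ⟨f, rfl⟩, ⟨g, rfl⟩, by simpa using h⟩
  · rintro _ _ ⟨f, rfl⟩ ⟨g, rfl⟩ h
    have h' : toEWZ f + toEWZ g * v = 0 := h
    have hf := (rho_sv f g).1
    have hg := (rho_sv f g).2
    rw [h', map_zero, Matrix.zero_apply] at hf hg
    subst hf
    subst hg
    exact ⟨map_zero toEWZ, map_zero toEWZ⟩
end
end
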